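/- Fix an odd integer p ≥ 5, let R₀ > 0 and C₀ > 0. Let u be an exterior solution on {r > R₀ + |t|} with data (u₀, u₁) ∈ H(R₀) such that for every ρ ≥ R₀ one has ‖u‖_{L²L⁸(ρ)} + ‖u‖_{L³L⁶(ρ)} + sup_{t∈ℝ} ‖(u(t,·), ∂_t u(t,·))‖_{H(ρ+|t|)} ≤ C₀‖(u(0,·),∂_t u(0,·))‖_{H(ρ)}, and such that the exterior energy of u vanishes. Then at least one of the following holds: (a) there exist t₀ ∈ ℝ and R > R₀ such that u(t₀, r) = 0 for all r > |t₀| + R; or (b) there exist ℓ ∈ ℝ \ {0}, R > R₀, and a C² function Z : (0,∞) → ℝ satisfying Z''(r) + (3/r)Z'(r) + |Z(r)|^{p−1}Z(r) = 0 for all r > 0 together with |r²Z(r) − ℓ| ≤ C·r^{4−2p} for some C > 0 and all sufficiently large r, such that u₀(r) = Z(r) and u₁(r) = 0 for all r > R. -/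

import Mathlib

open MeasureTheory Filter Set
open scoped ENNReal

/-- The exterior energy norm `‖(v,w)‖_{H(R)} = (∫_R^∞ (|v'|² + |w|²) r³ dr)^{1/2}`. -/
noncomputable def eH (R : ℝ) (v w : ℝ → ℝ) : ℝ≥0∞ :=
  ((∫⁻ r in Ioi R, ENNReal.ofReal ((deriv v r) ^ 2 * r ^ 3)) +
      ∫⁻ r in Ioi R, ENNReal.ofReal ((w r) ^ 2 * r ^ 3)) ^ (1 / 2 : ℝ)

/-- The exterior spacetime norm `‖u‖_{L^aL^b(R)}` over the region `{r > R + |t|}`. -/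
noncomputable def eLL (a b R : ℝ) (u : ℝ → ℝ → ℝ) : ℝ≥0∞ :=
  (∫⁻ t : ℝ,
      (∫⁻ r in Ioi (R + |t|), ENNReal.ofReal (|u t r| ^ b * r ^ 3)) ^ (a / b)) ^ (1 / a)

/-- The time derivative `∂_t u` of a function of `(t,r)`. -/
noncomputable def dtu (u : ℝ → ℝ → ℝ) (t r : ℝ) : ℝ := deriv (fun s => u s r) t

/-- `u` is an exterior solution of `∂_t²u - ∂_r²u - (3/r)∂_r u = |u|^{p-1}u`
on `{r > R + |t|}`, of smoothness class `C^n`. -/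
def IsExtSol (p : ℕ) (n : ℕ∞) (R : ℝ) (u : ℝ → ℝ → ℝ) : Prop :=
  ContDiffOn ℝ n (fun q : ℝ × ℝ => u q.1 q.2) {q : ℝ × ℝ | R + |q.1| < q.2} ∧
  ∀ t r : ℝ, R + |t| < r →
    deriv (fun s => dtu u s r) t - deriv (deriv (u t)) r - (3 / r) * deriv (u t) r
      = |u t r| ^ (p - 1) * u t r

/-- The exterior energy of `u` outside `{r > R + |t|}` vanishes as `t → ±∞`. -/
def ExtEnergyVanishes (R : ℝ) (u : ℝ → ℝ → ℝ) : Prop :=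
  Tendsto (fun t : ℝ => ∫ r in Ioi (R + |t|),
      ((dtu u t r) ^ 2 + (deriv (u t) r) ^ 2) * r ^ 3) atTop (nhds 0) ∧
  Tendsto (fun t : ℝ => ∫ r in Ioi (R + |t|),
      ((dtu u t r) ^ 2 + (deriv (u t) r) ^ 2) * r ^ 3) atBot (nhds 0)

/-- `sup_{t∈ℝ} ‖(u(t,·), ∂_t u(t,·))‖_{H(R+|t|)}`. -/
noncomputable def supH (R : ℝ) (u : ℝ → ℝ → ℝ) : ℝ≥0∞ :=
  ⨆ t : ℝ, eH (R + |t|) (u t) (fun r => dtu u t r)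

/-!
In the null coordinates `x = r - t`, `y = r + t`, the derivatives `a = ∂ₓ w` and `b = ∂_y w` of
`w = r² u` satisfy `∂_y a = ∂ₓ b = (a + b) / (2 (x + y)) - r² |u| ^ (p - 1) u / 4`. The tail of the
energy controls `u` pointwise, so `|u| ≤ ε / r` far out. If `a - w / (2 (x + y))` were not small,
it would grow like `√(x + y)` along an outgoing ray, against the vanishing of the exterior energy;
hence `a`, and by time reversal `b`, tend to `0` at infinity. Integrating the system along rays
bounds the supremum `μ` of `|a|, |b|` over the quadrant `x, y ≥ m` by `(3 μ + ν) / 4 + O(m⁻²)`,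
where `ν` is the supremum over `x, y ≥ 2 m`. Thus `μ ≤ ν + O(m⁻²)`, and summing over dyadic scales
gives `|a|, |b| = O(m⁻²)`.

At this decay rate a null system with a source `O(|w| / r³)` is determined by the limit of `w` at
infinity. Applied to the difference of `u` and its time translates, this shows that `u` is
stationary far out. The same principle applied to `u` itself gives `u = 0` when
`ℓ = lim r² u(0, r)` vanishes. Otherwise the stationary equation gives the rate of convergence to
`ℓ`, and the solution extends to all radii `r > 0` because
`(r³ z')² / 2 + r⁶ |z| ^ (p + 1) / (p + 1)` does not grow as `r` decreases.
-/

/-! ### Calculus on half-lines -/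

section HalfLine

lemma abs_sub_le_div_pow_of_abs_deriv_le {f f' : ℝ → ℝ} {K r s : ℝ} {n : ℕ} (hn : 1 ≤ n)
    (hr : 0 < r) (hf : ∀ z, r ≤ z → HasDerivAt f (f' z) z)
    (hbound : ∀ z, r ≤ z → |f' z| ≤ K / z ^ (n + 1)) (hrs : r ≤ s) :
    |f s - f r| ≤ K / r ^ n := by
  have hK : 0 ≤ K := by
    have h := (abs_nonneg _).trans (hbound r le_rfl)
    rwa [le_div_iff₀ (by positivity), zero_mul] at h
  have hboundary : ∀ z, r ≤ z → HasDerivAt (fun z => K / r ^ n - K / z ^ n)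
      (n * (K / z ^ (n + 1))) z := by
    intro z hz
    have hz0 : z ≠ 0 := (hr.trans_le hz).ne'
    refine ((((hasDerivAt_pow n z).fun_inv (pow_ne_zero n hz0)).const_mul K).const_sub
      (K / r ^ n)).congr_deriv ?_
    obtain ⟨k, rfl⟩ : ∃ k, n = k + 1 := ⟨n - 1, by omega⟩
    simp only [Nat.add_sub_cancel]
    field_simp
    ring
  have hle := image_norm_le_of_norm_deriv_right_le_deriv_boundary' (a := r) (b := s)
    (f := fun z => f z - f r) (f' := f')
    (fun z hz => ((hf z hz.1).sub_const _).continuousAt.continuousWithinAt)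
    (fun z hz => ((hf z hz.1).sub_const _).hasDerivWithinAt) (by simp)
    (fun z hz => (hboundary z hz.1).continuousAt.continuousWithinAt)
    (fun z hz => (hboundary z hz.1).hasDerivWithinAt)
    (fun z hz => (hbound z hz.1).trans (le_mul_of_one_le_left
      (div_nonneg hK (pow_nonneg (hr.trans_le hz.1).le _)) (by exact_mod_cast hn)))
    (right_mem_Icc.2 hrs)
  exact hle.trans (sub_le_self _ (div_nonneg hK (pow_nonneg (hr.trans_le hrs).le _)))

lemma abs_sub_limit_le_div_pow_of_abs_deriv_le {f f' : ℝ → ℝ} {K r l : ℝ} {n : ℕ} (hn : 1 ≤ n)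
    (hr : 0 < r) (hf : ∀ z, r ≤ z → HasDerivAt f (f' z) z)
    (hbound : ∀ z, r ≤ z → |f' z| ≤ K / z ^ (n + 1)) (hlim : Tendsto f atTop (nhds l)) :
    |f r - l| ≤ K / r ^ n := by
  rw [abs_sub_comm]
  refine le_of_tendsto (hlim.sub_const (f r)).abs ?_
  filter_upwards [eventually_ge_atTop r] with s hs
  exact abs_sub_le_div_pow_of_abs_deriv_le hn hr hf hbound hs

variable {f h : ℝ → ℝ} {s₀ s₁ μ ν N B : ℝ}

lemma monotoneOn_sub_sub_div_sqrt (hs₀ : 0 < s₀) (hN : 0 ≤ N)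
    (hf : ∀ s, s₀ ≤ s → HasDerivAt f (f s / (2 * s) + h s) s)
    (hh : ∀ s, s₀ ≤ s → -(μ / (2 * s) + N / s ^ 3) ≤ h s) :
    MonotoneOn (fun s => (f s - μ - N / s ^ 2) / √s) (Ici s₀) := by
  have hderiv : ∀ s, s₀ ≤ s → HasDerivAt (fun s => (f s - μ - N / s ^ 2) / √s)
      ((h s + μ / (2 * s) + 5 / 2 * (N / s ^ 3)) / √s) s := by
    intro s hs
    have hs' : 0 < s := hs₀.trans_le hs
    have hsqrt : 0 < √s := Real.sqrt_pos.2 hs'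
    have hN' := (hasDerivAt_const s N).fun_div (hasDerivAt_pow 2 s) (pow_ne_zero 2 hs'.ne')
    refine ((((hf s hs).sub_const μ).fun_sub hN').fun_div
      (Real.hasDerivAt_sqrt hs'.ne') hsqrt.ne').congr_deriv ?_
    obtain ⟨z, hz⟩ : ∃ z, √s = z := ⟨_, rfl⟩
    have hsz : s = z ^ 2 := by rw [← hz, Real.sq_sqrt hs'.le]
    rw [hz] at hsqrt ⊢
    rw [hsz]
    field_simp
    ring
  refine monotoneOn_of_hasDerivWithinAt_nonneg (convex_Ici s₀)
    (fun s hs => (hderiv s hs).continuousAt.continuousWithinAt)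
    (fun s hs => (hderiv s (interior_subset hs)).hasDerivWithinAt) fun s hs => ?_
  have hs : s₀ ≤ s := interior_subset hs
  have hN' : 0 ≤ N / s ^ 3 := div_nonneg hN (pow_nonneg (hs₀.trans_le hs).le _)
  exact div_nonneg (by linarith [hh s hs]) (Real.sqrt_nonneg s)

lemma le_add_div_sq_of_bddAbove (hs₀ : 0 < s₀) (hN : 0 ≤ N)
    (hf : ∀ s, s₀ ≤ s → HasDerivAt f (f s / (2 * s) + h s) s)
    (hh : ∀ s, s₀ ≤ s → -(μ / (2 * s) + N / s ^ 3) ≤ h s) (hB : ∀ s, s₀ ≤ s → f s ≤ B) :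
    f s₀ ≤ μ + N / s₀ ^ 2 := by
  have hlim : Tendsto (fun s => (B - μ) / √s) atTop (nhds 0) :=
    tendsto_const_nhds.div_atTop Real.tendsto_sqrt_atTop
  have hle : (f s₀ - μ - N / s₀ ^ 2) / √s₀ ≤ 0 := by
    refine ge_of_tendsto hlim ?_
    filter_upwards [eventually_ge_atTop s₀] with s hs
    refine (monotoneOn_sub_sub_div_sqrt hs₀ hN hf hh self_mem_Ici hs hs).trans ?_
    have hN' : 0 ≤ N / s ^ 2 := by positivity
    exact div_le_div_of_nonneg_right (by linarith [hB s hs]) (Real.sqrt_nonneg s)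
  linarith [(div_le_iff₀ (Real.sqrt_pos.2 hs₀)).1 hle]

lemma le_average_add_div_sq_of_le_later (hs₀ : 0 < s₀) (hN : 0 ≤ N) (hνμ : ν ≤ μ)
    (hs₁ : s₁ ∈ Icc s₀ (4 * s₀))
    (hf : ∀ s, s₀ ≤ s → HasDerivAt f (f s / (2 * s) + h s) s)
    (hh : ∀ s, s₀ ≤ s → -(μ / (2 * s) + N / s ^ 3) ≤ h s) (hfs₁ : f s₁ ≤ ν + N / s₁ ^ 2) :
    f s₀ ≤ (μ + ν) / 2 + N / s₀ ^ 2 := by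
  have hsqrt₀ : 0 < √s₀ := Real.sqrt_pos.2 hs₀
  have hsqrt₁ : 0 < √s₁ := Real.sqrt_pos.2 (hs₀.trans_le hs₁.1)
  have hsqrt_le : √s₁ ≤ 2 * √s₀ := by
    rw [Real.sqrt_le_left (by positivity), mul_pow, Real.sq_sqrt hs₀.le]
    linarith [hs₁.2]
  have hle : (f s₀ - μ - N / s₀ ^ 2) / √s₀ ≤ -((μ - ν) / (2 * √s₀)) :=
    calc (f s₀ - μ - N / s₀ ^ 2) / √s₀
        ≤ (f s₁ - μ - N / s₁ ^ 2) / √s₁ :=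
          monotoneOn_sub_sub_div_sqrt hs₀ hN hf hh self_mem_Ici hs₁.1 hs₁.1
      _ ≤ -(μ - ν) / √s₁ := by gcongr; linarith
      _ = -((μ - ν) / √s₁) := neg_div _ _
      _ ≤ -((μ - ν) / (2 * √s₀)) :=
          neg_le_neg (div_le_div_of_nonneg_left (by linarith) hsqrt₁ hsqrt_le)
  have hhalf : -((μ - ν) / (2 * √s₀)) * √s₀ = -(μ - ν) / 2 := by field_simp
  linarith [(div_le_iff₀ hsqrt₀).1 hle]

lemma le_average_add_div_sq (hs₀ : 0 < s₀) (hN : 0 ≤ N) (hs₁ : s₁ ≤ 4 * s₀)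
    (hf : ∀ s, s₀ ≤ s → HasDerivAt f (f s / (2 * s) + h s) s)
    (hμ : ∀ s, s₀ ≤ s → -(μ / (2 * s) + N / s ^ 3) ≤ h s)
    (hν : ∀ s, s₁ ≤ s → -(ν / (2 * s) + N / s ^ 3) ≤ h s)
    (hB : ∀ s, s₀ ≤ s → f s ≤ B) :
    f s₀ ≤ (μ + ν) / 2 + N / s₀ ^ 2 := by
  have hfμ := le_add_div_sq_of_bddAbove hs₀ hN hf hμ hB
  rcases le_total μ ν with hμν | hνμ
  · linarith
  rcases le_total s₁ s₀ with hs | hs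
  · linarith [le_add_div_sq_of_bddAbove hs₀ hN hf (fun s h => hν s (hs.trans h)) hB]
  · exact le_average_add_div_sq_of_le_later hs₀ hN hνμ ⟨hs, hs₁⟩ hf hμ
      (le_add_div_sq_of_bddAbove (hs₀.trans_le hs) hN (fun s h => hf s (hs.trans h))
        hν fun s h => hB s (hs.trans h))

lemma abs_le_average_add_div_sq (hs₀ : 0 < s₀) (hN : 0 ≤ N) (hs₁ : s₁ ≤ 4 * s₀)
    (hf : ∀ s, s₀ ≤ s → HasDerivAt f (f s / (2 * s) + h s) s)
    (hμ : ∀ s, s₀ ≤ s → |h s| ≤ μ / (2 * s) + N / s ^ 3)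
    (hν : ∀ s, s₁ ≤ s → |h s| ≤ ν / (2 * s) + N / s ^ 3)
    (hB : ∀ s, s₀ ≤ s → |f s| ≤ B) :
    |f s₀| ≤ (μ + ν) / 2 + N / s₀ ^ 2 := by
  refine abs_le'.2 ⟨?_, ?_⟩
  · exact le_average_add_div_sq hs₀ hN hs₁ hf (fun s h => (abs_le.1 (hμ s h)).1)
      (fun s h => (abs_le.1 (hν s h)).1) fun s h => (abs_le.1 (hB s h)).2
  · exact le_average_add_div_sq (f := fun s => -f s) (h := fun s => -h s) hs₀ hN hs₁
      (fun s h => (hf s h).fun_neg.congr_deriv (by ring))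
      (fun s h => neg_le_neg (abs_le.1 (hμ s h)).2)
      (fun s h => neg_le_neg (abs_le.1 (hν s h)).2)
      fun s h => neg_le.1 (abs_le.1 (hB s h)).1

end HalfLine

/-! ### Partial derivatives -/

/-- `f : ℝ → ℝ → ℝ` is (Fréchet) differentiable at `(x, y)`, with partial derivatives `α` in the
first variable and `β` in the second. -/
def HasPartialsAt (f : ℝ → ℝ → ℝ) (α β x y : ℝ) : Prop :=
  HasFDerivAt (fun q : ℝ × ℝ => f q.1 q.2)
    (α • ContinuousLinearMap.fst ℝ ℝ ℝ + β • ContinuousLinearMap.snd ℝ ℝ ℝ) (x, y)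

lemma hasPartialsAt_fst (x y : ℝ) : HasPartialsAt (fun x _ => x) 1 0 x y :=
  hasFDerivAt_fst.congr_fderiv (by simp)

lemma hasPartialsAt_snd (x y : ℝ) : HasPartialsAt (fun _ y => y) 0 1 x y :=
  hasFDerivAt_snd.congr_fderiv (by simp)

namespace HasPartialsAt

variable {f g : ℝ → ℝ → ℝ} {α β α' β' x y : ℝ}

lemma congr_partials (hf : HasPartialsAt f α β x y) (hα : α = α') (hβ : β = β') :
    HasPartialsAt f α' β' x y :=
  hα ▸ hβ ▸ hf

lemma comp_hasDerivAt {X Y : ℝ → ℝ} {X' Y' s : ℝ} (hf : HasPartialsAt f α β (X s) (Y s))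
    (hX : HasDerivAt X X' s) (hY : HasDerivAt Y Y' s) :
    HasDerivAt (fun s => f (X s) (Y s)) (α * X' + β * Y') s :=
  (HasFDerivAt.comp_hasDerivAt s (f := fun s => (X s, Y s)) hf (hX.prodMk hY)).congr_deriv (by simp)

lemma hasDerivAt_left (hf : HasPartialsAt f α β x y) : HasDerivAt (fun x => f x y) α x := by
  simpa using hf.comp_hasDerivAt (X := id) (hasDerivAt_id x) (hasDerivAt_const x y)

lemma hasDerivAt_right (hf : HasPartialsAt f α β x y) : HasDerivAt (f x) β y := by
  simpa using hf.comp_hasDerivAt (Y := id) (hasDerivAt_const y x) (hasDerivAt_id y)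

lemma comp {X Y : ℝ → ℝ → ℝ} {X₁ X₂ Y₁ Y₂ : ℝ} (hf : HasPartialsAt f α β (X x y) (Y x y))
    (hX : HasPartialsAt X X₁ X₂ x y) (hY : HasPartialsAt Y Y₁ Y₂ x y) :
    HasPartialsAt (fun x y => f (X x y) (Y x y)) (α * X₁ + β * Y₁) (α * X₂ + β * Y₂) x y :=
  (HasFDerivAt.comp (g := fun q : ℝ × ℝ => f q.1 q.2)
    (f := fun q : ℝ × ℝ => (X q.1 q.2, Y q.1 q.2)) (x, y) hf
    (hX.prodMk hY)).congr_fderiv (by ext <;> simp)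

lemma neg (hf : HasPartialsAt f α β x y) : HasPartialsAt (fun x y => -f x y) (-α) (-β) x y :=
  (HasFDerivAt.fun_neg hf).congr_fderiv (by ext <;> simp)

lemma add (hf : HasPartialsAt f α β x y) (hg : HasPartialsAt g α' β' x y) :
    HasPartialsAt (fun x y => f x y + g x y) (α + α') (β + β') x y :=
  (HasFDerivAt.fun_add hf hg).congr_fderiv (by ext <;> simp)

lemma sub (hf : HasPartialsAt f α β x y) (hg : HasPartialsAt g α' β' x y) :
    HasPartialsAt (fun x y => f x y - g x y) (α - α') (β - β') x y :=
  (HasFDerivAt.fun_sub hf hg).congr_fderiv (by ext <;> simp)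

lemma mul (hf : HasPartialsAt f α β x y) (hg : HasPartialsAt g α' β' x y) :
    HasPartialsAt (fun x y => f x y * g x y) (α * g x y + f x y * α') (β * g x y + f x y * β')
      x y :=
  (HasFDerivAt.fun_mul hf hg).congr_fderiv (by ext <;> simp <;> ring)

lemma div_const (hf : HasPartialsAt f α β x y) (c : ℝ) :
    HasPartialsAt (fun x y => f x y / c) (α / c) (β / c) x y :=
  (HasFDerivAt.mul_const hf c⁻¹).congr_fderiv (by ext <;> simp <;> ring)

lemma swap (hf : HasPartialsAt f α β x y) : HasPartialsAt (flip f) β α y x :=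
  (hf.comp (X := fun _ x => x) (Y := fun y _ => y) (hasPartialsAt_snd y x)
    (hasPartialsAt_fst y x)).congr_partials (by ring) (by ring)

end HasPartialsAt

/-! ### The null system -/

/-- On the quadrant `x, y > m`, the function `w` has partial derivatives `a = ∂ₓw` and `b = ∂_yw`,
and `∂_y a = ∂ₓ b = (a + b) / (2 (x + y)) - g`: the radial wave equation with source for
`w = r² u` in the null coordinates `x = r - t`, `y = r + t`. -/
structure IsNullSystem (m : ℝ) (w a b g : ℝ → ℝ → ℝ) : Prop where
  hasPartialsAt : ∀ x y, m < x → m < y → HasPartialsAt w (a x y) (b x y) x y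
  hasDerivAt_a : ∀ x y, m < x → m < y →
    HasDerivAt (a x) ((a x y + b x y) / (2 * (x + y)) - g x y) y
  hasDerivAt_b : ∀ x y, m < x → m < y →
    HasDerivAt (fun x => b x y) ((a x y + b x y) / (2 * (x + y)) - g x y) x

/-- Both `a` and `b` are bounded by `μ` on the closed quadrant `x, y ≥ m`. -/
def QuadrantBound (a b : ℝ → ℝ → ℝ) (m μ : ℝ) : Prop :=
  ∀ x y, m ≤ x → m ≤ y → |a x y| ≤ μ ∧ |b x y| ≤ μ

namespace QuadrantBound

variable {a b a' b' : ℝ → ℝ → ℝ} {m m' μ ν : ℝ}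

lemma nonneg (h : QuadrantBound a b m μ) : 0 ≤ μ :=
  (abs_nonneg _).trans (h m m le_rfl le_rfl).1

lemma mono (h : QuadrantBound a b m μ) (hm : m ≤ m') (hμ : μ ≤ ν) : QuadrantBound a b m' ν :=
  fun x y hx hy =>
    ⟨(h x y (hm.trans hx) (hm.trans hy)).1.trans hμ, (h x y (hm.trans hx) (hm.trans hy)).2.trans hμ⟩

lemma swap (h : QuadrantBound a b m μ) : QuadrantBound (flip b) (flip a) m μ :=
  fun x y hx hy => (h y x hy hx).symm

lemma of_tendsto {μ : ℕ → ℝ} (hμ : Tendsto μ atTop (nhds ν))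
    (h : ∀ n, QuadrantBound a b m (μ n)) : QuadrantBound a b m ν :=
  fun x y hx hy => ⟨ge_of_tendsto' hμ fun n => (h n x y hx hy).1,
    ge_of_tendsto' hμ fun n => (h n x y hx hy).2⟩

lemma sub (h : QuadrantBound a b m μ) (h' : QuadrantBound a' b' m ν) :
    QuadrantBound (fun x y => a x y - a' x y) (fun x y => b x y - b' x y) m (μ + ν) :=
  fun x y hx hy =>
    ⟨(abs_sub _ _).trans (add_le_add (h x y hx hy).1 (h' x y hx hy).1),
      (abs_sub _ _).trans (add_le_add (h x y hx hy).2 (h' x y hx hy).2)⟩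

end QuadrantBound

namespace IsNullSystem

variable {m₀ m N : ℝ} {w a b g w' a' b' g' : ℝ → ℝ → ℝ}

lemma swap (S : IsNullSystem m₀ w a b g) :
    IsNullSystem m₀ (flip w) (flip b) (flip a) (flip g) where
  hasPartialsAt x y hx hy := (S.hasPartialsAt y x hy hx).swap
  hasDerivAt_a x y hx hy := (S.hasDerivAt_b y x hy hx).congr_deriv (by simp only [flip]; ring)
  hasDerivAt_b x y hx hy := (S.hasDerivAt_a y x hy hx).congr_deriv (by simp only [flip]; ring)

lemma mono (S : IsNullSystem m₀ w a b g) (hm : m₀ ≤ m) : IsNullSystem m w a b g where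
  hasPartialsAt x y hx hy := S.hasPartialsAt x y (hm.trans_lt hx) (hm.trans_lt hy)
  hasDerivAt_a x y hx hy := S.hasDerivAt_a x y (hm.trans_lt hx) (hm.trans_lt hy)
  hasDerivAt_b x y hx hy := S.hasDerivAt_b x y (hm.trans_lt hx) (hm.trans_lt hy)

lemma sub (S : IsNullSystem m₀ w a b g) (S' : IsNullSystem m₀ w' a' b' g') :
    IsNullSystem m₀ (fun x y => w x y - w' x y) (fun x y => a x y - a' x y)
      (fun x y => b x y - b' x y) (fun x y => g x y - g' x y) where
  hasPartialsAt x y hx hy := (S.hasPartialsAt x y hx hy).sub (S'.hasPartialsAt x y hx hy)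
  hasDerivAt_a x y hx hy :=
    ((S.hasDerivAt_a x y hx hy).fun_sub (S'.hasDerivAt_a x y hx hy)).congr_deriv (by ring)
  hasDerivAt_b x y hx hy :=
    ((S.hasDerivAt_b x y hx hy).fun_sub (S'.hasDerivAt_b x y hx hy)).congr_deriv (by ring)

lemma timeShift (S : IsNullSystem m₀ w a b g) (c : ℝ) :
    IsNullSystem (m₀ + |c|) (fun x y => w (x - c) (y + c)) (fun x y => a (x - c) (y + c))
      (fun x y => b (x - c) (y + c)) (fun x y => g (x - c) (y + c)) := by
  have hsum : ∀ x y : ℝ, x - c + (y + c) = x + y := fun x y => by ring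
  have hx' : ∀ x, m₀ + |c| < x → m₀ < x - c := fun x hx => by linarith [le_abs_self c]
  have hy' : ∀ y, m₀ + |c| < y → m₀ < y + c := fun y hy => by linarith [neg_abs_le c]
  refine ⟨fun x y hx hy => ?_, fun x y hx hy => ?_, fun x y hx hy => ?_⟩
  · have hfst : HasPartialsAt (fun x _ => x - c) 1 0 x y :=
      (HasFDerivAt.sub_const c (hasPartialsAt_fst x y))
    have hsnd : HasPartialsAt (fun _ y => y + c) 0 1 x y :=
      (HasFDerivAt.add_const c (hasPartialsAt_snd x y))
    exact ((S.hasPartialsAt _ _ (hx' x hx) (hy' y hy)).comp hfst hsnd).congr_partials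
      (by ring) (by ring)
  · simpa only [hsum] using
      (S.hasDerivAt_a _ _ (hx' x hx) (hy' y hy)).comp_add_const y c
  · simpa only [hsum] using
      (S.hasDerivAt_b _ _ (hx' x hx) (hy' y hy)).comp_sub_const x c

lemma hasDerivAt_diagonal (S : IsNullSystem m₀ w a b g) {x y s : ℝ} (hx : m₀ < x + s)
    (hy : m₀ < y + s) :
    HasDerivAt (fun s => w (x + s) (y + s)) (a (x + s) (y + s) + b (x + s) (y + s)) s :=
  ((S.hasPartialsAt _ _ hx hy).comp_hasDerivAt ((hasDerivAt_id s).const_add x)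
    ((hasDerivAt_id s).const_add y)).congr_deriv (by ring)

/-! ### Dyadic contraction -/

lemma abs_a_le_average (S : IsNullSystem m₀ w a b g) (hm₀ : 0 < m₀) (hm : m₀ < m) (hN : 0 ≤ N)
    (hg : ∀ x y, m₀ < x → m₀ < y → |g x y| ≤ N / (x + y) ^ 3) {x y μ ν B : ℝ} (hx : m ≤ x)
    (hy : m ≤ y) (hμ : ∀ z, m ≤ z → |b x z| ≤ μ) (hν : ∀ z, 2 * m ≤ z → |b x z| ≤ ν)
    (hB : ∀ z, m ≤ z → |a x z| ≤ B) : |a x y| ≤ (μ + ν) / 2 + N / m ^ 2 := by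
  have hsource : ∀ κ s, x + m ≤ s → |b x (s - x)| ≤ κ →
      |b x (s - x) / (2 * s) - g x (s - x)| ≤ κ / (2 * s) + N / s ^ 3 := by
    intro κ s hs hκ
    have hgs := hg x (s - x) (by linarith) (by linarith)
    have hs' : 0 < 2 * s := by linarith
    rw [add_sub_cancel] at hgs
    refine (abs_sub _ _).trans (add_le_add ?_ hgs)
    rw [abs_div, abs_of_pos hs']
    gcongr
  have hline := abs_le_average_add_div_sq (f := fun s => a x (s - x))
    (h := fun s => b x (s - x) / (2 * s) - g x (s - x)) (s₀ := x + y) (s₁ := x + 2 * m)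
    (by linarith) hN (by linarith)
    (fun s hs => ((S.hasDerivAt_a x (s - x) (by linarith) (by linarith)).comp_sub_const s
      x).congr_deriv (by rw [add_sub_cancel]; ring))
    (fun s hs => hsource μ s (by linarith) (hμ _ (by linarith)))
    (fun s hs => hsource ν s (by linarith) (hν _ (by linarith)))
    (fun s _ => hB _ (by linarith))
  simp only [add_sub_cancel_left] at hline
  have hm' : 0 < m := hm₀.trans hm
  have hN' : N / (x + y) ^ 2 ≤ N / m ^ 2 := by gcongr; linarith
  linarith

lemma abs_a_le_of_quadrantBound (S : IsNullSystem m₀ w a b g) (hm₀ : 0 < m₀) (hm : m₀ < m)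
    (hN : 0 ≤ N) (hg : ∀ x y, m₀ < x → m₀ < y → |g x y| ≤ N / (x + y) ^ 3) {μ ν : ℝ}
    (hμ : QuadrantBound a b m μ) (hν : QuadrantBound a b (2 * m) ν) {x y : ℝ} (hx : m ≤ x)
    (hy : m ≤ y) : |a x y| ≤ (3 * μ + ν) / 4 + 2 * (N / m ^ 2) := by
  have hg' : ∀ x y, m₀ < x → m₀ < y → |flip g x y| ≤ N / (x + y) ^ 3 := fun x y hx hy => by
    rw [add_comm]; exact hg y x hy hx
  have hb : ∀ z, 2 * m ≤ z → |b x z| ≤ (μ + ν) / 2 + N / m ^ 2 := fun z hz =>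
    S.swap.abs_a_le_average hm₀ hm hN hg' (by linarith) hx
      (fun s hs => (hμ s z hs (by linarith)).1) (fun s hs => (hν s z hs hz).1)
      (fun s hs => (hμ s z hs (by linarith)).2)
  have ha := S.abs_a_le_average hm₀ hm hN hg hx hy (fun z hz => (hμ x z hx hz).2) hb
    (fun z hz => (hμ x z hx hz).1)
  have hm' : 0 < m := hm₀.trans hm
  have hN' : 0 ≤ N / m ^ 2 := by positivity
  linarith

lemma quadrantBound_step (S : IsNullSystem m₀ w a b g) (hm₀ : 0 < m₀) (hm : m₀ < m)
    (hN : 0 ≤ N) (hg : ∀ x y, m₀ < x → m₀ < y → |g x y| ≤ N / (x + y) ^ 3) {μ ν : ℝ}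
    (hμ : QuadrantBound a b m μ) (hν : QuadrantBound a b (2 * m) ν) :
    QuadrantBound a b m ((3 * μ + ν) / 4 + 2 * (N / m ^ 2)) := by
  have hg' : ∀ x y, m₀ < x → m₀ < y → |flip g x y| ≤ N / (x + y) ^ 3 := fun x y hx hy => by
    rw [add_comm]; exact hg y x hy hx
  exact fun x y hx hy => ⟨S.abs_a_le_of_quadrantBound hm₀ hm hN hg hμ hν hx hy,
    S.swap.abs_a_le_of_quadrantBound hm₀ hm hN hg' hμ.swap hν.swap hy hx⟩

lemma quadrantBound_of_double (S : IsNullSystem m₀ w a b g) (hm₀ : 0 < m₀) (hm : m₀ < m)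
    (hN : 0 ≤ N) (hg : ∀ x y, m₀ < x → m₀ < y → |g x y| ≤ N / (x + y) ^ 3) {μ ν : ℝ}
    (hμ : QuadrantBound a b m μ) (hν : QuadrantBound a b (2 * m) ν) :
    QuadrantBound a b m (ν + 8 * (N / m ^ 2)) := by
  have hm' : 0 < m := hm₀.trans hm
  have hL : 0 ≤ ν + 8 * (N / m ^ 2) := add_nonneg hν.nonneg (by positivity)
  have hiter : ∀ n : ℕ, QuadrantBound a b m (ν + 8 * (N / m ^ 2) + (3 / 4) ^ n * μ) := by
    intro n
    induction n with
    | zero => exact hμ.mono le_rfl (by linarith)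
    | succ n ih =>
      exact (S.quadrantBound_step hm₀ hm hN hg ih hν).mono le_rfl
        (by rw [pow_succ (3 / 4 : ℝ) n]; linarith)
  refine QuadrantBound.of_tendsto ?_ hiter
  have hpow := tendsto_pow_atTop_nhds_zero_of_lt_one (r := (3 / 4 : ℝ)) (by norm_num) (by norm_num)
  simpa using (hpow.mul_const μ).const_add (ν + 8 * (N / m ^ 2))

lemma quadrantBound_of_two_pow_mul (S : IsNullSystem m₀ w a b g) (hm₀ : 0 < m₀) (hN : 0 ≤ N)
    (hg : ∀ x y, m₀ < x → m₀ < y → |g x y| ≤ N / (x + y) ^ 3) {B : ℝ}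
    (hB : ∀ m, m₀ < m → QuadrantBound a b m B) {ν : ℝ} (k : ℕ) :
    ∀ m, m₀ < m → QuadrantBound a b (2 ^ k * m) ν → QuadrantBound a b m (ν + 11 * (N / m ^ 2)) := by
  induction k with
  | zero =>
    intro m _ hν
    have hN' : 0 ≤ N / m ^ 2 := by positivity
    exact hν.mono (by simp) (by linarith)
  | succ k ih =>
    intro m hm hν
    have hm' : 0 < m := hm₀.trans hm
    have h2m := ih (2 * m) (by linarith) (by rwa [← mul_assoc, ← pow_succ])
    have hN' : 0 ≤ N / m ^ 2 := by positivity
    have hquarter : N / (2 * m) ^ 2 = N / m ^ 2 / 4 := by field_simp; norm_num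
    exact (S.quadrantBound_of_double hm₀ hm hN hg (hB m hm) h2m).mono le_rfl (by linarith)

theorem quadrantBound_of_source_le (S : IsNullSystem m₀ w a b g) (hm₀ : 0 < m₀) (hN : 0 ≤ N)
    (hg : ∀ x y, m₀ < x → m₀ < y → |g x y| ≤ N / (x + y) ^ 3) {B : ℝ}
    (hB : ∀ m, m₀ < m → QuadrantBound a b m B)
    (hsmall : ∀ ε > 0, ∃ M, QuadrantBound a b M ε) (hm : m₀ < m) :
    QuadrantBound a b m (11 * (N / m ^ 2)) := by
  have hm' : 0 < m := hm₀.trans hm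
  have hscale : Tendsto (fun k : ℕ => (2 : ℝ) ^ k * m) atTop atTop :=
    (tendsto_pow_atTop_atTop_of_one_lt one_lt_two).atTop_mul_const hm'
  have hε : ∀ ε > 0, QuadrantBound a b m (ε + 11 * (N / m ^ 2)) := by
    intro ε hε
    obtain ⟨M, hM⟩ := hsmall ε hε
    obtain ⟨k, hk⟩ := (hscale.eventually (eventually_ge_atTop M)).exists
    exact S.quadrantBound_of_two_pow_mul hm₀ hN hg hB k m hm (hM.mono hk le_rfl)
  refine QuadrantBound.of_tendsto (μ := fun n : ℕ => 1 / ((n : ℝ) + 1) + 11 * (N / m ^ 2)) ?_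
    fun n => hε _ (by positivity)
  simpa only [zero_add] using
    (tendsto_one_div_add_atTop_nhds_zero_nat (𝕜 := ℝ)).add_const (11 * (N / m ^ 2))

/-! ### Uniqueness for small perturbations -/

lemma abs_sub_limit_le (S : IsNullSystem m₀ w a b g) (hm₀ : 0 < m₀) {μ : ℝ}
    (hμ : ∀ m, m₀ < m → QuadrantBound a b m (μ / m ^ 2)) {x y l : ℝ} (hx : m₀ < x) (hy : m₀ < y)
    (hl : Tendsto (fun t => w (x + t) (y + t)) atTop (nhds l)) :
    |w x y - l| ≤ 2 * μ / min x y := by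
  set m := min x y
  have hxm : m ≤ x := min_le_left x y
  have hym : m ≤ y := min_le_right x y
  have hm₀m : m₀ < m := lt_min hx hy
  have hdecay := abs_sub_limit_le_div_pow_of_abs_deriv_le (n := 1) (K := 2 * μ) le_rfl
    (hm₀.trans hm₀m)
    (fun s hs => (S.hasDerivAt_diagonal (x := x) (y := y) (s := s - m) (by linarith)
      (by linarith)).comp_sub_const s m)
    (fun s hs => ?_) (hl.comp (tendsto_atTop_add_const_right atTop (-m) tendsto_id))
  · simpa using hdecay
  · have hb := hμ s (by linarith) (x + (s - m)) (y + (s - m)) (by linarith) (by linarith)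
    refine (abs_add_le _ _).trans ?_
    rw [mul_div_assoc]
    linarith [hb.1, hb.2]

lemma quadrantBound_half (S : IsNullSystem m₀ w a b g) (hm₀ : 0 < m₀) {D μ : ℝ} (hD : 0 ≤ D)
    (hDm₀ : 44 * D ≤ m₀)
    (hg : ∀ x y, m₀ < x → m₀ < y → |g x y| ≤ D / (x + y) ^ 3 * |w x y|)
    (hl : ∀ x y, m₀ < x → m₀ < y → Tendsto (fun t => w (x + t) (y + t)) atTop (nhds 0))
    (hμ₀ : 0 ≤ μ) (hμ : ∀ m, m₀ < m → QuadrantBound a b m (μ / m ^ 2)) (hm : m₀ < m) :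
    QuadrantBound a b m (μ / 2 / m ^ 2) := by
  have hsource : ∀ x y, m₀ < x → m₀ < y → |g x y| ≤ (2 * D * μ / m₀) / (x + y) ^ 3 := by
    intro x y hx hy
    have hs : 0 < x + y := by linarith
    have hw : |w x y| ≤ 2 * μ / m₀ := by
      have hw' := S.abs_sub_limit_le hm₀ hμ hx hy (hl x y hx hy)
      rw [sub_zero] at hw'
      exact hw'.trans (by gcongr; exact (lt_min hx hy).le)
    calc |g x y| ≤ D / (x + y) ^ 3 * |w x y| := hg x y hx hy
      _ ≤ D / (x + y) ^ 3 * (2 * μ / m₀) := by gcongr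
      _ = (2 * D * μ / m₀) / (x + y) ^ 3 := by ring
  have hbounded : ∀ m, m₀ < m → QuadrantBound a b m (μ / m₀ ^ 2) := fun m hm =>
    (hμ m hm).mono le_rfl (by gcongr)
  have hsmall : ∀ ε > 0, ∃ M, QuadrantBound a b M ε := by
    intro ε hε
    have hlim : Tendsto (fun m : ℝ => μ / m ^ 2) atTop (nhds 0) :=
      tendsto_const_nhds.div_atTop (tendsto_pow_atTop two_ne_zero)
    obtain ⟨M, hMε, hM⟩ :=
      ((hlim.eventually (gt_mem_nhds hε)).and (eventually_gt_atTop m₀)).exists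
    exact ⟨M, (hμ M hM).mono le_rfl hMε.le⟩
  refine (S.quadrantBound_of_source_le hm₀ (by positivity) hsource hbounded hsmall hm).mono
    le_rfl ?_
  rw [← mul_div_assoc]
  gcongr
  rw [← mul_div_assoc, div_le_iff₀ hm₀]
  nlinarith

theorem eq_zero_of_source_le (S : IsNullSystem m₀ w a b g) (hm₀ : 0 < m₀) {D μ : ℝ} (hD : 0 ≤ D)
    (hDm₀ : 44 * D ≤ m₀)
    (hg : ∀ x y, m₀ < x → m₀ < y → |g x y| ≤ D / (x + y) ^ 3 * |w x y|)
    (hμ₀ : 0 ≤ μ) (hμ : ∀ m, m₀ < m → QuadrantBound a b m (μ / m ^ 2))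
    (hl : ∀ x y, m₀ < x → m₀ < y → Tendsto (fun t => w (x + t) (y + t)) atTop (nhds 0))
    {x y : ℝ} (hx : m₀ < x) (hy : m₀ < y) : w x y = 0 := by
  have hiter : ∀ n : ℕ, ∀ m, m₀ < m → QuadrantBound a b m (μ * (1 / 2) ^ n / m ^ 2) := by
    intro n
    induction n with
    | zero => simpa using hμ
    | succ n ih =>
      intro m hm
      rw [pow_succ, ← mul_assoc, mul_one_div]
      exact S.quadrantBound_half hm₀ hD hDm₀ hg hl (by positivity) ih hm
  have hbound : ∀ n : ℕ, |w x y| ≤ 2 * (μ * (1 / 2) ^ n) / min x y := fun n => by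
    simpa using S.abs_sub_limit_le hm₀ (hiter n) hx hy (hl x y hx hy)
  have hlim : Tendsto (fun n : ℕ => 2 * (μ * (1 / 2 : ℝ) ^ n) / min x y) atTop (nhds 0) := by
    have hpow :=
      tendsto_pow_atTop_nhds_zero_of_lt_one (r := (1 / 2 : ℝ)) (by norm_num) (by norm_num)
    simpa using ((hpow.const_mul μ).const_mul 2).div_const (min x y)
  exact abs_nonpos_iff.1 (ge_of_tendsto' hlim hbound)

end IsNullSystem

/-! ### Growth along outgoing rays -/

/-- The modification `a - w / (2 (x + y))` of `a = ∂ₓw`. Its `y`-derivative does not involve `b`, so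
it can be controlled along outgoing rays when only `w` and the source are known to be small. -/
noncomputable def decoupled (w a : ℝ → ℝ → ℝ) (x y : ℝ) : ℝ := a x y - w x y / (2 * (x + y))

namespace IsNullSystem

variable {m₀ N ε : ℝ} {w a b g : ℝ → ℝ → ℝ}

lemma neg (S : IsNullSystem m₀ w a b g) :
    IsNullSystem m₀ (fun x y => -w x y) (fun x y => -a x y) (fun x y => -b x y)
      (fun x y => -g x y) where
  hasPartialsAt x y hx hy := (S.hasPartialsAt x y hx hy).neg
  hasDerivAt_a x y hx hy := (S.hasDerivAt_a x y hx hy).fun_neg.congr_deriv (by ring)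
  hasDerivAt_b x y hx hy := (S.hasDerivAt_b x y hx hy).fun_neg.congr_deriv (by ring)

lemma hasDerivAt_decoupled (S : IsNullSystem m₀ w a b g) (hm₀ : 0 < m₀) {x y : ℝ} (hx : m₀ < x)
    (hy : m₀ < y) :
    HasDerivAt (decoupled w a x)
      (decoupled w a x y / (2 * (x + y)) + (3 / 4 * w x y / (x + y) ^ 2 - g x y)) y := by
  have hs : x + y ≠ 0 := by linarith
  have hlin : HasDerivAt (fun y => 2 * (x + y)) (2 * 1) y :=
    ((hasDerivAt_id y).const_add x).const_mul 2
  refine ((S.hasDerivAt_a x y hx hy).fun_sub ((S.hasPartialsAt x y hx hy).hasDerivAt_right.fun_div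
    hlin (mul_ne_zero two_ne_zero hs))).congr_deriv ?_
  simp only [decoupled]
  field_simp
  ring

lemma monotoneOn_decoupled (S : IsNullSystem m₀ w a b g) (hm₀ : 0 < m₀) (hN : 0 ≤ N)
    (hw : ∀ x y, m₀ < x → m₀ < y → |w x y| ≤ ε * ((x + y) / 2))
    (hg : ∀ x y, m₀ < x → m₀ < y → |g x y| ≤ N / (x + y) ^ 3) {x y₀ : ℝ} (hx : m₀ < x)
    (hy₀ : m₀ < y₀) :
    MonotoneOn (fun s => (decoupled w a x (s - x) - 3 / 4 * ε - N / s ^ 2) / √s)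
      (Ici (x + y₀)) := by
  refine monotoneOn_sub_sub_div_sqrt (h := fun s => 3 / 4 * w x (s - x) / s ^ 2 - g x (s - x))
    (by linarith) hN (fun s hs => ?_) fun s hs => ?_
  · exact ((S.hasDerivAt_decoupled hm₀ hx (y := s - x) (by linarith)).comp_sub_const s
      x).congr_deriv (by rw [add_sub_cancel])
  · have hs' : 0 < s := by linarith
    have hws := hw x (s - x) hx (by linarith)
    have hgs := hg x (s - x) hx (by linarith)
    rw [add_sub_cancel] at hws hgs
    refine neg_le_of_abs_le ((abs_sub _ _).trans (add_le_add ?_ hgs))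
    rw [abs_div, abs_mul, abs_of_pos (by norm_num : (0 : ℝ) < 3 / 4),
      abs_of_pos (by positivity : 0 < s ^ 2)]
    calc 3 / 4 * |w x (s - x)| / s ^ 2 ≤ 3 / 4 * (ε * (s / 2)) / s ^ 2 := by gcongr
      _ = 3 / 4 * ε / (2 * s) := by field_simp

lemma exists_sqrt_le_decoupled (S : IsNullSystem m₀ w a b g) (hm₀ : 0 < m₀) (hN : 0 ≤ N)
    (hε : 0 ≤ ε) (hw : ∀ x y, m₀ < x → m₀ < y → |w x y| ≤ ε * ((x + y) / 2))
    (hg : ∀ x y, m₀ < x → m₀ < y → |g x y| ≤ N / (x + y) ^ 3) {x₀ y₀ : ℝ} (hx₀ : m₀ < x₀)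
    (hy₀ : m₀ < y₀) (ha : ContinuousAt (fun x => a x y₀) x₀)
    (hlarge : 3 / 4 * ε + N / (x₀ + y₀) ^ 2 < decoupled w a x₀ y₀) :
    ∃ τ > 0, ∃ x₁ > x₀, ∀ x ∈ Icc x₀ x₁, ∀ y, y₀ ≤ y → τ * √(x + y) ≤ decoupled w a x y := by
  have hs₀ : 0 < x₀ + y₀ := by linarith
  set Q : ℝ → ℝ := fun x =>
    (decoupled w a x y₀ - 3 / 4 * ε - N / (x + y₀) ^ 2) / √(x + y₀)
  have hQ₀ : 0 < Q x₀ := div_pos (by linarith) (Real.sqrt_pos.2 hs₀)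
  have hQcont : ContinuousAt Q x₀ := by
    have hw₀ := (S.hasPartialsAt x₀ y₀ hx₀ hy₀).hasDerivAt_left.continuousAt
    have hlin : ContinuousAt (fun x => x + y₀) x₀ := by fun_prop
    have hc : ContinuousAt (fun x => decoupled w a x y₀) x₀ :=
      ha.sub (hw₀.div (hlin.const_mul 2) (mul_pos two_pos hs₀).ne')
    exact ((hc.sub continuousAt_const).sub
      (continuousAt_const.div (hlin.pow 2) (pow_pos hs₀ 2).ne')).div hlin.sqrt
      (Real.sqrt_pos.2 hs₀).ne'
  obtain ⟨δ, hδ, hQδ⟩ := Metric.eventually_nhds_iff.1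
    (hQcont.eventually (lt_mem_nhds (half_lt_self hQ₀)))
  refine ⟨Q x₀ / 2, half_pos hQ₀, x₀ + δ / 2, by linarith, fun x hx y hy => ?_⟩
  have hQx : Q x₀ / 2 < Q x := hQδ (by
    rw [Real.dist_eq, abs_of_nonneg (by linarith [hx.1])]; linarith [hx.2])
  have hmono := S.monotoneOn_decoupled hm₀ hN hw hg (x := x) (by linarith [hx.1]) hy₀
    self_mem_Ici (show x + y ∈ Ici (x + y₀) by simpa using hy) (by linarith)
  simp only [add_sub_cancel_left] at hmono
  have hs : 0 < x + y := by linarith [hx.1]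
  have hN' : 0 ≤ N / (x + y) ^ 2 := by positivity
  have hlt := (lt_div_iff₀ (Real.sqrt_pos.2 hs)).1 (hQx.trans_le hmono)
  linarith

lemma exists_sqrt_le_abs_decoupled (S : IsNullSystem m₀ w a b g) (hm₀ : 0 < m₀) (hN : 0 ≤ N)
    (hε : 0 ≤ ε) (hw : ∀ x y, m₀ < x → m₀ < y → |w x y| ≤ ε * ((x + y) / 2))
    (hg : ∀ x y, m₀ < x → m₀ < y → |g x y| ≤ N / (x + y) ^ 3) {x₀ y₀ : ℝ} (hx₀ : m₀ < x₀)
    (hy₀ : m₀ < y₀) (ha : ContinuousAt (fun x => a x y₀) x₀)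
    (hlarge : 3 / 4 * ε + N / (x₀ + y₀) ^ 2 < |decoupled w a x₀ y₀|) :
    ∃ τ > 0, ∃ x₁ > x₀, ∀ x ∈ Icc x₀ x₁, ∀ y, y₀ ≤ y → τ * √(x + y) ≤ |decoupled w a x y| := by
  have hneg : ∀ x y, decoupled (fun x y => -w x y) (fun x y => -a x y) x y = -decoupled w a x y :=
    fun x y => by simp only [decoupled]; ring
  rcases lt_abs.1 hlarge with h | h
  · obtain ⟨τ, hτ, x₁, hx₁, hle⟩ := S.exists_sqrt_le_decoupled hm₀ hN hε hw hg hx₀ hy₀ ha h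
    exact ⟨τ, hτ, x₁, hx₁, fun x hx y hy => (hle x hx y hy).trans (le_abs_self _)⟩
  · obtain ⟨τ, hτ, x₁, hx₁, hle⟩ := S.neg.exists_sqrt_le_decoupled hm₀ hN hε
      (by simpa using hw) (by simpa using hg) hx₀ hy₀ ha.neg (by rwa [hneg])
    exact ⟨τ, hτ, x₁, hx₁, fun x hx y hy =>
      (hle x hx y hy).trans ((hneg x y).trans_le (neg_le_abs _))⟩

end IsNullSystem

/-! ### The nonlinearity -/

/-- The power nonlinearity `|s| ^ (p - 1) * s`. -/
noncomputable def signedPow (p : ℕ) (s : ℝ) : ℝ := |s| ^ (p - 1) * s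

section signedPow

variable {p : ℕ} {s t K : ℝ}

lemma abs_signedPow (hp : 1 ≤ p) (s : ℝ) : |signedPow p s| = |s| ^ p := by
  rw [signedPow, abs_mul, abs_pow, abs_abs, ← pow_succ, Nat.sub_add_cancel hp]

lemma signedPow_mul_self_nonneg (p : ℕ) (s : ℝ) : 0 ≤ signedPow p s * s := by
  rw [signedPow, mul_assoc]
  exact mul_nonneg (by positivity) (mul_self_nonneg s)

lemma signedPow_neg (p : ℕ) (s : ℝ) : signedPow p (-s) = -signedPow p s := by
  rw [signedPow, signedPow, abs_neg, mul_neg]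

lemma signedPow_of_nonneg (hp : 1 ≤ p) (hs : 0 ≤ s) : signedPow p s = s ^ p := by
  rw [signedPow, abs_of_nonneg hs, pow_sub_one_mul (by lia)]

lemma abs_signedPow_sub_le_of_nonneg (hp : 1 ≤ p) (hs : 0 ≤ s) (ht : 0 ≤ t) (hsK : s ≤ K)
    (htK : t ≤ K) : |signedPow p s - signedPow p t| ≤ p * K ^ (p - 1) * |s - t| := by
  have hmax : max |s| |t| ≤ K := max_le (by rwa [abs_of_nonneg hs]) (by rwa [abs_of_nonneg ht])
  rw [signedPow_of_nonneg hp hs, signedPow_of_nonneg hp ht]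
  calc |s ^ p - t ^ p| ≤ |s - t| * p * max |s| |t| ^ (p - 1) := abs_pow_sub_pow_le s t p
    _ ≤ |s - t| * p * K ^ (p - 1) := by gcongr
    _ = p * K ^ (p - 1) * |s - t| := by ring

lemma abs_signedPow_sub_le_of_nonpos_of_nonneg (hp : 1 ≤ p) (hs : s ≤ 0) (ht : 0 ≤ t)
    (hsK : |s| ≤ K) (htK : |t| ≤ K) :
    |signedPow p s - signedPow p t| ≤ p * K ^ (p - 1) * |s - t| := by
  have hp' : (1 : ℝ) ≤ p := by exact_mod_cast hp
  have hK : 0 ≤ K := (abs_nonneg s).trans hsK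
  have hbound {z : ℝ} (hz : |z| ≤ K) : |signedPow p z| ≤ K ^ (p - 1) * |z| := by
    rw [signedPow, abs_mul, abs_pow, abs_abs]
    gcongr
  calc |signedPow p s - signedPow p t| ≤ |signedPow p s| + |signedPow p t| := abs_sub _ _
    _ ≤ K ^ (p - 1) * |s| + K ^ (p - 1) * |t| := add_le_add (hbound hsK) (hbound htK)
    _ = 1 * K ^ (p - 1) * |s - t| := by
      rw [abs_of_nonpos hs, abs_of_nonneg ht, abs_of_nonpos (by linarith)]; ring
    _ ≤ p * K ^ (p - 1) * |s - t| := by gcongr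

theorem abs_signedPow_sub_le (hp : 1 ≤ p) (hs : |s| ≤ K) (ht : |t| ≤ K) :
    |signedPow p s - signedPow p t| ≤ p * K ^ (p - 1) * |s - t| := by
  rcases le_total 0 s with hs₀ | hs₀ <;> rcases le_total 0 t with ht₀ | ht₀
  · exact abs_signedPow_sub_le_of_nonneg hp hs₀ ht₀ (le_of_abs_le hs) (le_of_abs_le ht)
  · rw [abs_sub_comm, abs_sub_comm s]
    exact abs_signedPow_sub_le_of_nonpos_of_nonneg hp ht₀ hs₀ ht hs
  · exact abs_signedPow_sub_le_of_nonpos_of_nonneg hp hs₀ ht₀ hs ht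
  · have h := abs_signedPow_sub_le_of_nonneg hp (neg_nonneg.2 hs₀) (neg_nonneg.2 ht₀)
      ((neg_le_abs s).trans hs) ((neg_le_abs t).trans ht)
    rwa [signedPow_neg, signedPow_neg, neg_sub_neg, neg_sub_neg, abs_sub_comm,
      abs_sub_comm t] at h

lemma locallyLipschitz_signedPow (hp : 1 ≤ p) : LocallyLipschitz (signedPow p) := fun x => by
  refine ⟨(p * (|x| + 1) ^ (p - 1)).toNNReal, {s | |s| < |x| + 1},
    continuous_abs.continuousAt.eventually_lt_const (lt_add_one |x|),
    .of_dist_le_mul fun s hs t ht => ?_⟩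
  rw [Real.coe_toNNReal _ (by positivity)]
  exact abs_signedPow_sub_le hp (le_of_lt hs) (le_of_lt ht)

end signedPow

/-! ### Exterior solutions -/

lemma hasPartialsAt_of_differentiableAt {u : ℝ → ℝ → ℝ} {t r : ℝ}
    (hu : DifferentiableAt ℝ (fun q : ℝ × ℝ => u q.1 q.2) (t, r)) :
    HasPartialsAt u (dtu u t r) (deriv (u t) r) t r := by
  have hpart : HasPartialsAt u (fderiv ℝ (fun q : ℝ × ℝ => u q.1 q.2) (t, r) (1, 0))
      (fderiv ℝ (fun q : ℝ × ℝ => u q.1 q.2) (t, r) (0, 1)) t r :=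
    hu.hasFDerivAt.congr_fderiv (by ext <;> simp)
  exact hpart.congr_partials hpart.hasDerivAt_left.deriv.symm hpart.hasDerivAt_right.deriv.symm

lemma exists_second_partials_of_contDiffAt {u : ℝ → ℝ → ℝ} {t r : ℝ}
    (hu : ContDiffAt ℝ 2 (fun q : ℝ × ℝ => u q.1 q.2) (t, r)) :
    ∃ utt utr urr, HasPartialsAt (dtu u) utt utr t r ∧
      HasPartialsAt (fun t r => deriv (u t) r) utr urr t r := by
  set U : ℝ × ℝ → ℝ := fun q => u q.1 q.2
  set U'' := fderiv ℝ (fderiv ℝ U) (t, r)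
  have hdiff : ∀ᶠ q in nhds (t, r), DifferentiableAt ℝ U q :=
    (hu.eventually (by simp)).mono fun q hq => hq.differentiableAt (by norm_num)
  have hU'' (v : ℝ × ℝ) : HasFDerivAt (fun q => fderiv ℝ U q v) (U''.flip v) (t, r) := by
    have hd : ContDiffAt ℝ 1 (fderiv ℝ U) (t, r) := hu.fderiv_right (by norm_num)
    simpa using (hd.differentiableAt one_ne_zero).hasFDerivAt.clm_apply
      (hasFDerivAt_const v (t, r))
  have hsymm : U'' (1, 0) (0, 1) = U'' (0, 1) (1, 0) := hu.isSymmSndFDerivAt (by simp) _ _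
  refine ⟨U'' (1, 0) (1, 0), U'' (0, 1) (1, 0), U'' (0, 1) (0, 1), ?_, ?_⟩
  · refine ((hU'' (1, 0)).congr_of_eventuallyEq ?_).congr_fderiv (by ext <;> simp)
    filter_upwards [hdiff] with q hq
    simp [hasPartialsAt_of_differentiableAt hq |>.fderiv, U]
  · refine ((hU'' (0, 1)).congr_of_eventuallyEq ?_).congr_fderiv (by ext <;> simp [hsymm])
    filter_upwards [hdiff] with q hq
    simp [hasPartialsAt_of_differentiableAt hq |>.fderiv, U]

/-- The time reversal `(t, r) ↦ u (-t) r`, which exchanges the two null directions. -/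
def timeReverse (u : ℝ → ℝ → ℝ) (t r : ℝ) : ℝ := u (-t) r

lemma dtu_timeReverse (u : ℝ → ℝ → ℝ) (t r : ℝ) :
    dtu (timeReverse u) t r = -dtu u (-t) r :=
  deriv_comp_neg (fun s => u s r) t

lemma isOpen_exterior (R : ℝ) : IsOpen {q : ℝ × ℝ | R + |q.1| < q.2} :=
  isOpen_lt (by fun_prop) (by fun_prop)

namespace IsExtSol

variable {p : ℕ} {R R' : ℝ} {u : ℝ → ℝ → ℝ}

lemma mono {n : ℕ∞} (hu : IsExtSol p n R u) (hR : R ≤ R') : IsExtSol p n R' u :=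
  ⟨hu.1.mono fun q hq => (add_le_add_left hR |q.1|).trans_lt hq,
    fun t r hr => hu.2 t r ((add_le_add_left hR |t|).trans_lt hr)⟩

lemma timeReverse {n : ℕ∞} (hu : IsExtSol p n R u) : IsExtSol p n R (timeReverse u) := by
  refine ⟨?_, fun t r hr => ?_⟩
  · exact hu.1.comp (contDiff_fst.neg.prodMk contDiff_snd).contDiffOn fun q hq => by
      simpa only [mem_ofPred_eq, abs_neg] using hq
  · have htt : deriv (fun s => dtu (_root_.timeReverse u) s r) t
        = deriv (fun s => dtu u s r) (-t) := by
      simp only [dtu_timeReverse]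
      rw [deriv.fun_neg, deriv_comp_neg (fun s => dtu u s r) t, neg_neg]
    rw [htt]
    exact hu.2 (-t) r (by rwa [abs_neg])

lemma contDiffAt {n : ℕ∞} (hu : IsExtSol p n R u) {t r : ℝ} (hr : R + |t| < r) :
    ContDiffAt ℝ n (fun q : ℝ × ℝ => u q.1 q.2) (t, r) :=
  hu.1.contDiffAt ((isOpen_exterior R).mem_nhds hr)

lemma hasPartialsAt (hu : IsExtSol p 2 R u) {t r : ℝ} (hr : R + |t| < r) :
    HasPartialsAt u (dtu u t r) (deriv (u t) r) t r :=
  hasPartialsAt_of_differentiableAt ((hu.contDiffAt hr).differentiableAt two_ne_zero)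

lemma exists_second_partials (hu : IsExtSol p 2 R u) {t r : ℝ} (hr : R + |t| < r) :
    ∃ utt utr urr, HasPartialsAt (dtu u) utt utr t r ∧
      HasPartialsAt (fun t r => deriv (u t) r) utr urr t r ∧
      utt - urr - 3 / r * deriv (u t) r = signedPow p (u t r) := by
  obtain ⟨utt, utr, urr, ht, hr'⟩ := exists_second_partials_of_contDiffAt (hu.contDiffAt hr)
  refine ⟨utt, utr, urr, ht, hr', ?_⟩
  rw [← ht.hasDerivAt_left.deriv, ← hr'.hasDerivAt_right.deriv]
  exact hu.2 t r hr

end IsExtSol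

/-! ### Null coordinates -/

section NullCoordinates

/-- A function of `(t, r)` as a function of the null coordinates `x = r - t`, `y = r + t`. -/
noncomputable def nullPull (f : ℝ → ℝ → ℝ) (x y : ℝ) : ℝ := f ((y - x) / 2) ((x + y) / 2)

/-- `w = r² u` in null coordinates. -/
noncomputable def nullW (u : ℝ → ℝ → ℝ) (x y : ℝ) : ℝ := ((x + y) / 2) ^ 2 * nullPull u x y

/-- `∂ₓ w = r² (∂ᵣ u - ∂ₜ u) / 2 + r u` in null coordinates. -/
noncomputable def nullA (u : ℝ → ℝ → ℝ) (x y : ℝ) : ℝ :=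
  ((x + y) / 2) ^ 2 * ((nullPull (fun t r => deriv (u t) r) x y - nullPull (dtu u) x y) / 2)
    + (x + y) / 2 * nullPull u x y

/-- `∂_y w = r² (∂ᵣ u + ∂ₜ u) / 2 + r u` in null coordinates. -/
noncomputable def nullB (u : ℝ → ℝ → ℝ) (x y : ℝ) : ℝ :=
  ((x + y) / 2) ^ 2 * ((nullPull (fun t r => deriv (u t) r) x y + nullPull (dtu u) x y) / 2)
    + (x + y) / 2 * nullPull u x y

/-- The source `r² |u| ^ (p - 1) u / 4` of the null system in null coordinates. -/
noncomputable def nullSource (p : ℕ) (u : ℝ → ℝ → ℝ) (x y : ℝ) : ℝ :=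
  ((x + y) / 2) ^ 2 * signedPow p (nullPull u x y) / 4

variable {f u : ℝ → ℝ → ℝ} {R x y : ℝ}

lemma nullPull_sub_add (f : ℝ → ℝ → ℝ) (t r : ℝ) : nullPull f (r - t) (r + t) = f t r := by
  simp only [nullPull]; congr 1 <;> ring

lemma exterior_of_lt_of_lt (hx : R < x) (hy : R < y) : R + |(y - x) / 2| < (x + y) / 2 := by
  have habs : |(y - x) / 2| < (x + y) / 2 - R := abs_lt.2 ⟨by linarith, by linarith⟩
  linarith

lemma nullPull_timeReverse (u : ℝ → ℝ → ℝ) (x y : ℝ) :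
    nullPull (timeReverse u) y x = nullPull u x y := by
  simp only [nullPull, timeReverse]; congr 1 <;> ring

lemma nullA_timeReverse (u : ℝ → ℝ → ℝ) : nullA (timeReverse u) = flip (nullB u) := by
  funext y x
  have ht : nullPull (dtu (timeReverse u)) y x = -nullPull (dtu u) x y := by
    simp only [nullPull, dtu_timeReverse]; congr 2 <;> ring
  have hr : nullPull (fun t r => deriv (timeReverse u t) r) y x
      = nullPull (fun t r => deriv (u t) r) x y :=
    nullPull_timeReverse (fun t r => deriv (u t) r) x y
  simp only [flip, nullA, nullB, nullPull_timeReverse, ht, hr, sub_neg_eq_add, add_comm y x]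

lemma nullB_timeReverse (u : ℝ → ℝ → ℝ) : nullB (timeReverse u) = flip (nullA u) := by
  have h := nullA_timeReverse (timeReverse u)
  have hu : timeReverse (timeReverse u) = u := by
    funext t r; simp only [timeReverse, neg_neg]
  rw [hu] at h
  exact (congrArg flip h).symm

lemma nullSource_timeReverse (p : ℕ) (u : ℝ → ℝ → ℝ) :
    nullSource p (timeReverse u) = flip (nullSource p u) := by
  funext y x
  simp only [flip, nullSource, nullPull_timeReverse, add_comm]

lemma hasPartialsAt_radius (x y : ℝ) :
    HasPartialsAt (fun x y => (x + y) / 2) (1 / 2) (1 / 2) x y :=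
  (((hasPartialsAt_fst x y).add (hasPartialsAt_snd x y)).div_const 2).congr_partials
    (by ring) (by ring)

lemma hasPartialsAt_radius_sq (x y : ℝ) :
    HasPartialsAt (fun x y => ((x + y) / 2) ^ 2) ((x + y) / 2) ((x + y) / 2) x y := by
  simp only [pow_two]
  exact ((hasPartialsAt_radius x y).mul (hasPartialsAt_radius x y)).congr_partials
    (by ring) (by ring)

lemma hasPartialsAt_time (x y : ℝ) :
    HasPartialsAt (fun x y => (y - x) / 2) (-1 / 2) (1 / 2) x y :=
  (((hasPartialsAt_snd x y).sub (hasPartialsAt_fst x y)).div_const 2).congr_partials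
    (by ring) (by ring)

lemma HasPartialsAt.nullPull {α β : ℝ} (hf : HasPartialsAt f α β ((y - x) / 2) ((x + y) / 2)) :
    HasPartialsAt (nullPull f) ((β - α) / 2) ((β + α) / 2) x y :=
  (hf.comp (hasPartialsAt_time x y) (hasPartialsAt_radius x y)).congr_partials (by ring) (by ring)

variable {p : ℕ}

lemma IsExtSol.hasPartialsAt_nullW (hu : IsExtSol p 2 R u) (hx : R < x) (hy : R < y) :
    HasPartialsAt (nullW u) (nullA u x y) (nullB u x y) x y :=
  ((hasPartialsAt_radius_sq x y).mul
    (hu.hasPartialsAt (exterior_of_lt_of_lt hx hy)).nullPull).congr_partials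
    (by simp only [nullA, nullPull]; ring) (by simp only [nullB, nullPull]; ring)

lemma IsExtSol.exists_hasPartialsAt_nullA (hu : IsExtSol p 2 R u) (hR : 0 ≤ R) (hx : R < x)
    (hy : R < y) :
    ∃ α, HasPartialsAt (nullA u) α
      ((nullA u x y + nullB u x y) / (2 * (x + y)) - nullSource p u x y) x y := by
  have hr := exterior_of_lt_of_lt hx hy
  obtain ⟨utt, utr, urr, htt, hrr, heq⟩ := hu.exists_second_partials hr
  refine ⟨_, (((hasPartialsAt_radius_sq x y).mul ((hrr.nullPull.sub htt.nullPull).div_const 2)).add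
    ((hasPartialsAt_radius x y).mul (hu.hasPartialsAt hr).nullPull)).congr_partials rfl ?_⟩
  have hs : x + y ≠ 0 := by linarith
  simp only [nullA, nullB, nullSource, nullPull, ← heq]
  field_simp
  ring

theorem IsExtSol.isNullSystem (hu : IsExtSol p 2 R u) (hR : 0 ≤ R) :
    IsNullSystem R (nullW u) (nullA u) (nullB u) (nullSource p u) where
  hasPartialsAt _ _ hx hy := hu.hasPartialsAt_nullW hx hy
  hasDerivAt_a _ _ hx hy := (hu.exists_hasPartialsAt_nullA hR hx hy).choose_spec.hasDerivAt_right
  hasDerivAt_b x y hx hy := by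
    have h := (hu.timeReverse.exists_hasPartialsAt_nullA hR hy hx).choose_spec.hasDerivAt_right
    rw [nullA_timeReverse, nullB_timeReverse, nullSource_timeReverse] at h
    exact h.congr_deriv (by simp only [flip]; ring)

end NullCoordinates

/-! ### Solutions that do not radiate -/

section NoOutgoingFlux

/-- The energy density `((∂ₜ u)² + (∂ᵣ u)²) r³` with respect to `dr`. -/
noncomputable def energyDensity (u : ℝ → ℝ → ℝ) (t r : ℝ) : ℝ :=
  ((dtu u t r) ^ 2 + (deriv (u t) r) ^ 2) * r ^ 3

/-- No energy radiates forward in time: on every outgoing strip `x₁ ≤ r - t ≤ x₂` beyond `m` the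
energy density takes arbitrarily small values at arbitrarily late times. -/
def NoOutgoingFlux (m : ℝ) (u : ℝ → ℝ → ℝ) : Prop :=
  ∀ x₁ x₂ T τ : ℝ, m < x₁ → x₁ < x₂ → 0 < τ →
    ∃ t r, T ≤ t ∧ r - t ∈ Icc x₁ x₂ ∧ energyDensity u t r < τ

variable {u : ℝ → ℝ → ℝ} {p : ℕ} {m ε τ x y t r : ℝ}

lemma abs_sq_mul_signedPow_div_four_le {s : ℝ} (hp : 5 ≤ p) (hr : 1 ≤ r) (hε₁ : ε ≤ 1)
    (hs : |s| ≤ ε / r) : |r ^ 2 * signedPow p s / 4| ≤ 2 * ε / (2 * r) ^ 3 := by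
  have hr₀ : 0 < r := by linarith
  have hε : 0 ≤ ε := by
    by_contra! hneg
    linarith [abs_nonneg s, div_neg_of_neg_of_pos hneg hr₀]
  have hs₁ : |s| ≤ 1 := hs.trans ((div_le_one hr₀).2 (by linarith))
  have hpow : |s| ^ p ≤ ε / r ^ 5 :=
    calc |s| ^ p ≤ |s| ^ 5 := pow_le_pow_of_le_one (abs_nonneg s) hs₁ hp
      _ ≤ (ε / r) ^ 5 := by gcongr
      _ = ε ^ 5 / r ^ 5 := div_pow ε r 5
      _ ≤ ε / r ^ 5 := by gcongr; exact pow_le_of_le_one hε hε₁ (by norm_num)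
  rw [abs_div, abs_mul, abs_pow, abs_signedPow (by lia), abs_of_pos hr₀,
    abs_of_pos (four_pos (α := ℝ))]
  calc r ^ 2 * |s| ^ p / 4 ≤ r ^ 2 * (ε / r ^ 5) / 4 := by gcongr
    _ = 2 * ε / (2 * r) ^ 3 := by field_simp; norm_num

lemma abs_nullSource_le (hp : 5 ≤ p) (hm : 1 ≤ m) (hε₁ : ε ≤ 1)
    (hu : ∀ t r, m + |t| < r → |u t r| ≤ ε / r) (hx : m < x) (hy : m < y) :
    |nullSource p u x y| ≤ 2 * ε / (x + y) ^ 3 := by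
  have h := abs_sq_mul_signedPow_div_four_le hp (by linarith) hε₁
    (hu _ _ (exterior_of_lt_of_lt hx hy))
  rwa [mul_div_cancel₀ (x + y) two_ne_zero] at h

lemma abs_nullW_le (hm : 0 ≤ m) (hu : ∀ t r, m + |t| < r → |u t r| ≤ ε / r) (hx : m < x)
    (hy : m < y) : |nullW u x y| ≤ ε * ((x + y) / 2) := by
  have hs : 0 < (x + y) / 2 := by linarith
  rw [nullW, abs_mul, abs_of_pos (by positivity)]
  calc ((x + y) / 2) ^ 2 * |nullPull u x y| ≤ ((x + y) / 2) ^ 2 * (ε / ((x + y) / 2)) := by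
        gcongr; exact hu _ _ (exterior_of_lt_of_lt hx hy)
    _ = ε * ((x + y) / 2) := by field_simp

lemma decoupled_nullA_sub_add (u : ℝ → ℝ → ℝ) (hr : 0 < r) :
    decoupled (nullW u) (nullA u) (r - t) (r + t)
      = r ^ 2 * (deriv (u t) r - dtu u t r) / 2 + 3 / 4 * (r * u t r) := by
  have hsum : r - t + (r + t) = 2 * r := by ring
  simp only [decoupled, nullW, nullA, nullPull_sub_add, hsum]
  field_simp
  ring

lemma sq_le_energyDensity (hr : 0 < r) (hu : |u t r| ≤ 1 / r)
    (hlarge : 2 ≤ τ * √(2 * r))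
    (hdec : τ * √(2 * r) ≤ |decoupled (nullW u) (nullA u) (r - t) (r + t)|) :
    τ ^ 2 ≤ energyDensity u t r := by
  have hru : |3 / 4 * (r * u t r)| ≤ 3 / 4 := by
    rw [abs_mul, abs_mul, abs_of_pos hr, abs_of_pos (by norm_num : (0 : ℝ) < 3 / 4)]
    rw [le_div_iff₀ hr] at hu
    linarith
  have hgrad : τ * √(2 * r) / 2 ≤ |r ^ 2 * (deriv (u t) r - dtu u t r) / 2| := by
    rw [decoupled_nullA_sub_add u hr] at hdec
    linarith [abs_add_le (r ^ 2 * (deriv (u t) r - dtu u t r) / 2) (3 / 4 * (r * u t r))]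
  have hsq := pow_le_pow_left₀ (by linarith) hgrad 2
  rw [sq_abs, div_pow, mul_pow, Real.sq_sqrt (by linarith)] at hsq
  have hdiff : 2 * τ ^ 2 ≤ (deriv (u t) r - dtu u t r) ^ 2 * r ^ 3 :=
    le_of_mul_le_mul_right (by linarith) hr
  have hpar : (deriv (u t) r - dtu u t r) ^ 2 * r ^ 3 ≤ 2 * energyDensity u t r := by
    rw [energyDensity, ← mul_assoc]
    gcongr
    linarith [sq_nonneg (deriv (u t) r + dtu u t r)]
  linarith

lemma two_le_mul_sqrt (hτ : 0 < τ) (hr : 2 / τ ^ 2 ≤ r) : 2 ≤ τ * √(2 * r) := by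
  rw [← div_le_iff₀' hτ]
  apply Real.le_sqrt_of_sq_le
  calc (2 / τ) ^ 2 = 2 * (2 / τ ^ 2) := by ring
    _ ≤ 2 * r := by gcongr

theorem IsExtSol.abs_decoupled_le_of_noOutgoingFlux (hsol : IsExtSol p 2 m u) (hp : 5 ≤ p)
    (hm : 1 ≤ m) (hε : 0 ≤ ε) (hε₁ : ε ≤ 1) (hu : ∀ t r, m + |t| < r → |u t r| ≤ ε / r)
    (hflux : NoOutgoingFlux m u) (hx : m < x) (hy : m < y) :
    |decoupled (nullW u) (nullA u) x y| ≤ 3 / 4 * ε + 2 * ε / (x + y) ^ 2 := by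
  by_contra! hlarge
  have hm₀ : 0 < m := by linarith
  obtain ⟨α, hα⟩ := hsol.exists_hasPartialsAt_nullA hm₀.le hx hy
  obtain ⟨τ, hτ, x₁, hx₁, hgrow⟩ := (hsol.isNullSystem hm₀.le).exists_sqrt_le_abs_decoupled hm₀
    (by positivity) hε (fun x y hx hy => abs_nullW_le hm₀.le hu hx hy)
    (fun x y hx hy => abs_nullSource_le hp hm hε₁ hu hx hy) hx hy
    hα.hasDerivAt_left.continuousAt hlarge
  obtain ⟨t, r, ht, hrt, hsmall⟩ :=
    hflux x x₁ (max y (2 / τ ^ 2)) (τ ^ 2) hx hx₁ (by positivity)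
  have hyt : y ≤ t := (le_max_left _ _).trans ht
  have hτt : 2 / τ ^ 2 ≤ t := (le_max_right _ _).trans ht
  have htr : m + t < r := by linarith [hrt.1]
  have hr : 0 < r := by linarith
  have hdec := hgrow (r - t) hrt (r + t) (by linarith)
  rw [show r - t + (r + t) = 2 * r by ring] at hdec
  have hur : |u t r| ≤ 1 / r := (hu t r (by rwa [abs_of_pos (by linarith)])).trans (by gcongr)
  exact hsmall.not_ge (sq_le_energyDensity hr hur (two_le_mul_sqrt hτ (by linarith)) hdec)

theorem IsExtSol.abs_nullA_le_of_noOutgoingFlux (hsol : IsExtSol p 2 m u) (hp : 5 ≤ p)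
    (hm : 1 ≤ m) (hε : 0 ≤ ε) (hε₁ : ε ≤ 1) (hu : ∀ t r, m + |t| < r → |u t r| ≤ ε / r)
    (hflux : NoOutgoingFlux m u) (hx : m < x) (hy : m < y) : |nullA u x y| ≤ 4 * ε := by
  have hs : 2 ≤ x + y := by linarith
  have hdec := hsol.abs_decoupled_le_of_noOutgoingFlux hp hm hε hε₁ hu hflux hx hy
  have hrem : 2 * ε / (x + y) ^ 2 ≤ 2 * ε / 2 ^ 2 := by gcongr
  have hw : |nullW u x y / (2 * (x + y))| ≤ ε := by
    rw [abs_div, abs_of_pos (by linarith : 0 < 2 * (x + y)), div_le_iff₀ (by linarith)]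
    nlinarith [abs_nullW_le (by linarith) hu hx hy]
  calc |nullA u x y| = |decoupled (nullW u) (nullA u) x y + nullW u x y / (2 * (x + y))| := by
        rw [decoupled, sub_add_cancel]
    _ ≤ |decoupled (nullW u) (nullA u) x y| + |nullW u x y / (2 * (x + y))| := abs_add_le _ _
    _ ≤ 4 * ε := by linarith

end NoOutgoingFlux

/-! ### Decay from finite energy -/

section Decay

variable {f f' : ℝ → ℝ} {ρ r s ε q : ℝ}

lemma tendsto_setLIntegral_Ioi_atTop {F : ℝ → ℝ≥0∞} {R : ℝ} (hF : ∫⁻ r in Ioi R, F r ≠ ⊤) :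
    Tendsto (fun ρ => ∫⁻ r in Ioi ρ, F r) atTop (nhds 0) := by
  set μ := (volume.restrict (Ioi R)).withDensity F
  have hμ {ρ : ℝ} (hρ : R ≤ ρ) : μ (Ioi ρ) = ∫⁻ r in Ioi ρ, F r := by
    rw [withDensity_apply _ measurableSet_Ioi, Measure.restrict_restrict measurableSet_Ioi,
      inter_eq_left.2 (Ioi_subset_Ioi hρ)]
  have hlim := tendsto_measure_iInter_atTop (μ := μ) (s := fun ρ : ℝ => Ioi ρ)
    (fun _ => measurableSet_Ioi.nullMeasurableSet) (fun _ _ h => Ioi_subset_Ioi h)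
    ⟨R, by rwa [hμ le_rfl]⟩
  have hempty : ⋂ ρ : ℝ, Ioi ρ = ∅ :=
    eq_empty_of_forall_notMem fun r hr => lt_irrefl r (mem_iInter.1 hr r)
  rw [hempty, measure_empty] at hlim
  exact hlim.congr' ((eventually_ge_atTop R).mono fun ρ hρ => hμ hρ)

lemma eH_sq (R : ℝ) (v w : ℝ → ℝ) :
    eH R v w ^ 2 = (∫⁻ r in Ioi R, ENNReal.ofReal ((deriv v r) ^ 2 * r ^ 3)) +
      ∫⁻ r in Ioi R, ENNReal.ofReal ((w r) ^ 2 * r ^ 3) := by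
  rw [eH, ← ENNReal.rpow_natCast, ← ENNReal.rpow_mul]
  norm_num

lemma tendsto_eH_atTop {R : ℝ} {v w : ℝ → ℝ} (h : eH R v w ≠ ⊤) :
    Tendsto (fun ρ => eH ρ v w) atTop (nhds 0) := by
  have hsum : eH R v w ^ 2 ≠ ⊤ := ENNReal.pow_ne_top h
  rw [eH_sq, ENNReal.add_ne_top] at hsum
  have hlim := ((tendsto_setLIntegral_Ioi_atTop hsum.1).add
    (tendsto_setLIntegral_Ioi_atTop hsum.2)).ennrpow_const (1 / 2)
  rwa [add_zero, ENNReal.zero_rpow_of_pos (by norm_num)] at hlim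

lemma eventually_forall_eH_le {R C : ℝ} {u : ℝ → ℝ → ℝ} (hdata : eH R (u 0) (dtu u 0) ≠ ⊤)
    (hsup : ∀ ρ, R ≤ ρ → supH ρ u ≤ ENNReal.ofReal C * eH ρ (u 0) (dtu u 0)) (hε : 0 < ε) :
    ∀ᶠ ρ in atTop, ∀ t, eH (ρ + |t|) (u t) (dtu u t) ≤ ENNReal.ofReal ε := by
  have hlim := ENNReal.Tendsto.const_mul (a := ENNReal.ofReal C) (tendsto_eH_atTop hdata)
    (Or.inr ENNReal.ofReal_ne_top)
  rw [mul_zero] at hlim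
  filter_upwards [hlim.eventually (gt_mem_nhds (ENNReal.ofReal_pos.2 hε)), eventually_ge_atTop R]
    with ρ hsmall hρ t
  exact (le_iSup (fun t => eH (ρ + |t|) (u t) (dtu u t)) t).trans ((hsup ρ hρ).trans hsmall.le)

lemma abs_le_half_mul_sq_add_inv {l q : ℝ} (hl : 0 < l) (hq : 0 < q) (z : ℝ) :
    |z| ≤ l / 2 * (z ^ 2 * q) + 1 / (2 * l) * q⁻¹ := by
  have hsq : l / 2 * (z ^ 2 * q) + 1 / (2 * l) * q⁻¹ - |z|
      = (l * |z| * q - 1) ^ 2 / (2 * l * q) := by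
    rw [← sq_abs z]
    field_simp
    ring
  have hnonneg : 0 ≤ (l * |z| * q - 1) ^ 2 / (2 * l * q) := by positivity
  linarith

lemma intervalIntegrable_inv_cube (hr : 0 < r) (hrs : r ≤ s) :
    IntervalIntegrable (fun z : ℝ => (z ^ 3)⁻¹) volume r s := by
  refine ContinuousOn.intervalIntegrable (ContinuousOn.inv₀ (by fun_prop) fun z hz => ?_)
  rw [uIcc_of_le hrs] at hz
  exact (pow_pos (hr.trans_le hz.1) 3).ne'

lemma integral_inv_cube_le (hr : 0 < r) (hrs : r ≤ s) :
    ∫ z in r..s, (z ^ 3)⁻¹ ≤ 1 / (2 * r ^ 2) := by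
  have hzero : (0 : ℝ) ∉ uIcc r s := by
    rw [uIcc_of_le hrs]
    exact fun h => hr.not_ge h.1
  have heq : ∫ z in r..s, z ^ (-3 : ℤ) = (s ^ (-2 : ℤ) - r ^ (-2 : ℤ)) / (-2) := by
    rw [integral_zpow (Or.inr ⟨by norm_num, hzero⟩)]
    norm_num
  simp only [zpow_neg, zpow_ofNat] at heq
  have hs : 0 ≤ (s ^ 2)⁻¹ := by positivity
  rw [heq, one_div, mul_inv]
  linarith

lemma intervalIntegral_le_of_setLIntegral_le {F : ℝ → ℝ} {K : ℝ} (hrs : r ≤ s) (hK : 0 ≤ K)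
    (hF : ContinuousOn F (Icc r s)) (hF₀ : ∀ z ∈ Icc r s, 0 ≤ F z)
    (hint : ∫⁻ z in Ioc r s, ENNReal.ofReal (F z) ≤ ENNReal.ofReal K) :
    ∫ z in r..s, F z ≤ K := by
  rw [intervalIntegral.integral_of_le hrs, ← ENNReal.ofReal_le_ofReal_iff hK,
    ofReal_integral_eq_lintegral_ofReal (hF.integrableOn_Icc.mono_set Ioc_subset_Icc_self)]
  · exact hint
  · filter_upwards [ae_restrict_mem measurableSet_Ioc] with z hz
    exact hF₀ z (Ioc_subset_Icc_self hz)

lemma abs_sub_le_of_lintegral_deriv_sq_le (hε : 0 < ε) (hr : 0 < r) (hrs : r ≤ s) (hρ : ρ < r)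
    (hf : ∀ z, ρ < z → HasDerivAt f (f' z) z) (hf' : ContinuousOn f' (Ioi ρ))
    (hint : ∫⁻ z in Ioi ρ, ENNReal.ofReal ((f' z) ^ 2 * z ^ 3) ≤ ENNReal.ofReal (ε ^ 2)) :
    |f s - f r| ≤ 3 / 4 * (ε / r) := by
  have hcont : ContinuousOn f' (Icc r s) := hf'.mono fun z hz => hρ.trans_le hz.1
  have hcont_sq : ContinuousOn (fun z => (f' z) ^ 2 * z ^ 3) (Icc r s) :=
    (hcont.pow 2).mul (by fun_prop)
  have hint_sq : IntervalIntegrable (fun z => (f' z) ^ 2 * z ^ 3) volume r s :=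
    hcont_sq.intervalIntegrable_of_Icc hrs
  have hint_inv := intervalIntegrable_inv_cube hr hrs
  have henergy : ∫ z in r..s, (f' z) ^ 2 * z ^ 3 ≤ ε ^ 2 := by
    refine intervalIntegral_le_of_setLIntegral_le hrs (sq_nonneg ε) hcont_sq (fun z hz => ?_)
      ((lintegral_mono_set fun z hz => hρ.trans hz.1).trans hint)
    have hz₀ : 0 < z := hr.trans_le hz.1
    positivity
  -- Weighted AM-GM in place of Cauchy-Schwarz: this weight balances the two terms.
  set l := 1 / (r * ε) with hl
  have hl₀ : 0 < l := by positivity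
  calc |f s - f r| = ‖∫ z in r..s, f' z‖ := by
        rw [intervalIntegral.integral_eq_sub_of_hasDerivAt (fun z hz => hf z ?_)
          (hcont.intervalIntegrable_of_Icc hrs), Real.norm_eq_abs]
        rw [uIcc_of_le hrs] at hz
        exact hρ.trans_le hz.1
    _ ≤ ∫ z in r..s, (l / 2 * ((f' z) ^ 2 * z ^ 3) + 1 / (2 * l) * (z ^ 3)⁻¹) :=
        intervalIntegral.norm_integral_le_of_norm_le hrs
          (Eventually.of_forall fun z hz =>
            abs_le_half_mul_sq_add_inv hl₀ (pow_pos (hr.trans hz.1) 3) (f' z))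
          ((hint_sq.const_mul _).add (hint_inv.const_mul _))
    _ = l / 2 * (∫ z in r..s, (f' z) ^ 2 * z ^ 3) + 1 / (2 * l) * ∫ z in r..s, (z ^ 3)⁻¹ := by
        rw [intervalIntegral.integral_add (hint_sq.const_mul _) (hint_inv.const_mul _),
          intervalIntegral.integral_const_mul, intervalIntegral.integral_const_mul]
    _ ≤ l / 2 * ε ^ 2 + 1 / (2 * l) * (1 / (2 * r ^ 2)) := by
        gcongr
        exact integral_inv_cube_le hr hrs
    _ = 3 / 4 * (ε / r) := by rw [hl]; field_simp; ring

lemma lintegral_Ioi_eq_top_of_le {F : ℝ → ℝ≥0∞} {c : ℝ≥0∞} (hc : c ≠ 0)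
    (hF : ∀ z, r < z → c ≤ F z) : ∫⁻ z in Ioi r, F z = ⊤ := by
  refine top_le_iff.1 (le_trans ?_ (setLIntegral_mono' measurableSet_Ioi hF))
  rw [setLIntegral_const, Real.volume_Ioi, ENNReal.mul_top hc]

lemma abs_le_div_of_lintegral_deriv_sq_le (hε : 0 < ε) (hq : 0 ≤ q) (hr : 0 < r) (hρ : ρ < r)
    (hf : ∀ z, ρ < z → HasDerivAt f (f' z) z) (hf' : ContinuousOn f' (Ioi ρ))
    (hint : ∫⁻ z in Ioi ρ, ENNReal.ofReal ((f' z) ^ 2 * z ^ 3) ≤ ENNReal.ofReal (ε ^ 2))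
    (hfin : ∫⁻ z in Ioi ρ, ENNReal.ofReal (|f z| ^ q * z ^ 3) ≠ ⊤) : |f r| ≤ ε / r := by
  by_contra! hlarge
  have hfar : ∀ z, r < z → ε / r * (1 / 4) ≤ |f z| := fun z hz => by
    have hdiff := abs_sub_le_of_lintegral_deriv_sq_le hε hr hz.le hρ hf hf' hint
    linarith [abs_sub_comm (f r) (f z), abs_sub_abs_le_abs_sub (f r) (f z)]
  have htop : ∫⁻ z in Ioi r, ENNReal.ofReal (|f z| ^ q * z ^ 3) = ⊤ :=
    lintegral_Ioi_eq_top_of_le (c := ENNReal.ofReal ((ε / r * (1 / 4)) ^ q * r ^ 3))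
      (ENNReal.ofReal_pos.2 (by positivity)).ne' fun z hz =>
        ENNReal.ofReal_le_ofReal (by have := hfar z hz; gcongr)
  exact hfin (top_le_iff.1 (htop.ge.trans (lintegral_mono_set (Ioi_subset_Ioi hρ.le))))

lemma dense_ne_top_of_lintegral_ne_top {X : Type*} [TopologicalSpace X] [MeasurableSpace X]
    [OpensMeasurableSpace X] {μ : Measure X} [μ.IsOpenPosMeasure] {F : X → ℝ≥0∞}
    (hF : ∫⁻ x, F x ∂μ ≠ ⊤) : Dense {x | F x ≠ ⊤} := by
  refine dense_iff_inter_open.2 fun U hU hne => ?_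
  by_contra hempty
  have htop : ∀ x ∈ U, ⊤ ≤ F x := fun x hx => top_le_iff.2 <| by
    by_contra hx'
    exact hempty ⟨x, hx, hx'⟩
  refine hF (top_le_iff.1 (le_trans ?_ (setLIntegral_le_lintegral U F)))
  refine le_trans ?_ (setLIntegral_mono' hU.measurableSet htop)
  rw [setLIntegral_const, ENNReal.top_mul (hU.measure_pos μ hne).ne']

lemma dense_lintegral_ne_top_of_eLL_ne_top {a b R : ℝ} {u : ℝ → ℝ → ℝ} (ha : 0 < a) (hb : 0 < b)
    (hLL : eLL a b R u ≠ ⊤) :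
    Dense {t | ∫⁻ r in Ioi (R + |t|), ENNReal.ofReal (|u t r| ^ b * r ^ 3) ≠ ⊤} := by
  have hint : ∫⁻ t : ℝ, (∫⁻ r in Ioi (R + |t|), ENNReal.ofReal (|u t r| ^ b * r ^ 3)) ^ (a / b)
      ≠ ⊤ := fun htop => hLL (by rw [eLL, htop, ENNReal.top_rpow_of_pos (by positivity)])
  refine (dense_ne_top_of_lintegral_ne_top hint).mono fun t (ht : _ ≠ ⊤) htop => ht ?_
  rw [htop, ENNReal.top_rpow_of_pos (div_pos ha hb)]

namespace IsExtSol

variable {p : ℕ} {R : ℝ} {u : ℝ → ℝ → ℝ}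

lemma continuousOn_deriv (hsol : IsExtSol p 2 R u) (t : ℝ) :
    ContinuousOn (deriv (u t)) (Ioi (R + |t|)) := fun r hr => by
  obtain ⟨_, _, _, -, hrr, -⟩ := hsol.exists_second_partials hr
  exact hrr.hasDerivAt_right.continuousAt.continuousWithinAt

lemma continuousOn_dtu (hsol : IsExtSol p 2 R u) (t : ℝ) :
    ContinuousOn (dtu u t) (Ioi (R + |t|)) := fun r hr => by
  obtain ⟨_, _, _, htt, -, -⟩ := hsol.exists_second_partials hr
  exact htt.hasDerivAt_right.continuousAt.continuousWithinAt

theorem abs_le_div_of_forall_eH_le (hsol : IsExtSol p 2 R u) (hR : 0 ≤ R) {a b : ℝ} (ha : 0 < a)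
    (hb : 0 < b) (hLL : eLL a b R u ≠ ⊤) (hε : 0 < ε) (hρ : R ≤ ρ)
    (hE : ∀ t, eH (ρ + |t|) (u t) (dtu u t) ≤ ENNReal.ofReal ε) {t : ℝ} (hr : ρ + |t| < r) :
    |u t r| ≤ ε / r := by
  have hr₀ : 0 < r := by linarith [abs_nonneg t]
  have hgood : ∀ t, ρ + |t| < r → ∫⁻ z in Ioi (R + |t|), ENNReal.ofReal (|u t z| ^ b * z ^ 3) ≠ ⊤ →
      |u t r| ≤ ε / r := fun t ht hfin => by
    refine abs_le_div_of_lintegral_deriv_sq_le hε hb.le hr₀ ht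
      (fun z hz => (hsol.hasPartialsAt (by linarith)).hasDerivAt_right)
      ((hsol.continuousOn_deriv t).mono (Ioi_subset_Ioi (by linarith))) ?_
      (ne_top_of_le_ne_top hfin (lintegral_mono_set (Ioi_subset_Ioi (by linarith))))
    rw [ENNReal.ofReal_pow hε.le]
    exact (le_self_add.trans_eq (eH_sq _ _ _).symm).trans (pow_le_pow_left' (hE t) 2)
  have hnhds : ∀ᶠ t' in nhds t, ρ + |t'| < r :=
    (show ContinuousAt (fun t : ℝ => ρ + |t|) t by fun_prop).eventually (gt_mem_nhds hr)
  have hcont : ContinuousAt (fun t => |u t r|) t :=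
    (hsol.hasPartialsAt (by linarith)).hasDerivAt_left.continuousAt.abs
  refine le_of_tendsto_of_frequently hcont ?_
  exact (mem_closure_iff_frequently.1 (dense_lintegral_ne_top_of_eLL_ne_top ha hb hLL t)).mp
    (hnhds.mono fun t' ht' hfin => hgood t' ht' hfin)

lemma integrableOn_energyDensity (hsol : IsExtSol p 2 R u) (hR : 0 ≤ R) {t : ℝ}
    (hE : eH (R + |t|) (u t) (dtu u t) ≠ ⊤) :
    IntegrableOn (energyDensity u t) (Ioi (R + |t|)) := by
  have hweighted {h : ℝ → ℝ} (hh : ContinuousOn h (Ioi (R + |t|)))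
      (hfin : ∫⁻ r in Ioi (R + |t|), ENNReal.ofReal (h r ^ 2 * r ^ 3) ≠ ⊤) :
      IntegrableOn (fun r => h r ^ 2 * r ^ 3) (Ioi (R + |t|)) := by
    have hmeas : AEStronglyMeasurable (fun r => h r ^ 2 * r ^ 3)
        (volume.restrict (Ioi (R + |t|))) :=
      ((hh.pow 2).mul (continuousOn_id.pow 3)).aestronglyMeasurable measurableSet_Ioi
    refine (lintegral_ofReal_ne_top_iff_integrable hmeas ?_).1 hfin
    filter_upwards [ae_restrict_mem measurableSet_Ioi] with r hr
    have hr₀ : 0 < r := (add_nonneg hR (abs_nonneg t)).trans_lt hr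
    exact mul_nonneg (sq_nonneg _) (pow_pos hr₀ 3).le
  have hsum := ENNReal.pow_ne_top hE (n := 2)
  rw [eH_sq, ENNReal.add_ne_top] at hsum
  refine ((hweighted (hsol.continuousOn_dtu t) hsum.2).add
    (hweighted (hsol.continuousOn_deriv t) hsum.1)).congr (Eventually.of_forall fun r => ?_)
  simp only [Pi.add_apply, energyDensity]
  ring

end IsExtSol

end Decay

/-! ### Vanishing exterior energy -/

section VanishingExteriorEnergy

variable {u : ℝ → ℝ → ℝ} {p : ℕ} {R m ε : ℝ}

lemma NoOutgoingFlux.mono {m' : ℝ} (h : NoOutgoingFlux m u) (hm : m ≤ m') :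
    NoOutgoingFlux m' u :=
  fun x₁ x₂ T τ hx₁ hx₂ hτ => h x₁ x₂ T τ (hm.trans_lt hx₁) hx₂ hτ

lemma energyDensity_nonneg (u : ℝ → ℝ → ℝ) {t r : ℝ} (hr : 0 ≤ r) : 0 ≤ energyDensity u t r := by
  rw [energyDensity]
  positivity

lemma energyDensity_timeReverse (u : ℝ → ℝ → ℝ) (t : ℝ) :
    energyDensity (timeReverse u) t = energyDensity u (-t) := by
  funext r
  rw [energyDensity, dtu_timeReverse, neg_sq]
  rfl

lemma noOutgoingFlux_of_tendsto (hR : 0 ≤ R)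
    (hint : ∀ t, IntegrableOn (energyDensity u t) (Ioi (R + |t|)))
    (hlim : Tendsto (fun t => ∫ r in Ioi (R + |t|), energyDensity u t r) atTop (nhds 0)) :
    NoOutgoingFlux R u := by
  intro x₁ x₂ T τ hx₁ hx₂ hτ
  by_contra! hlarge
  have hlower : ∀ᶠ t in atTop, (x₂ - x₁) * τ ≤ ∫ r in Ioi (R + |t|), energyDensity u t r := by
    filter_upwards [eventually_ge_atTop T, eventually_ge_atTop 0] with t hT ht₀
    have hsub : Icc (x₁ + t) (x₂ + t) ⊆ Ioi (R + |t|) := fun r hr => by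
      rw [mem_Ioi, abs_of_nonneg ht₀]
      linarith [hr.1]
    calc (x₂ - x₁) * τ = ∫ _ in Icc (x₁ + t) (x₂ + t), τ := by
          rw [setIntegral_const, Real.volume_real_Icc_of_le (by linarith), smul_eq_mul]
          ring
      _ ≤ ∫ r in Icc (x₁ + t) (x₂ + t), energyDensity u t r :=
          setIntegral_mono_on (integrableOn_const (by simp)) ((hint t).mono_set hsub)
            measurableSet_Icc fun r hr => hlarge t r hT ⟨by linarith [hr.1], by linarith [hr.2]⟩
      _ ≤ ∫ r in Ioi (R + |t|), energyDensity u t r := by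
          refine setIntegral_mono_set (hint t) ?_ hsub.eventuallyLE
          filter_upwards [ae_restrict_mem measurableSet_Ioi] with r hr
          exact energyDensity_nonneg u ((add_nonneg hR (abs_nonneg t)).trans hr.le)
  have hpos : 0 < (x₂ - x₁) * τ := mul_pos (by linarith) hτ
  exact hpos.not_ge (ge_of_tendsto hlim hlower)

lemma ExtEnergyVanishes.noOutgoingFlux (h : ExtEnergyVanishes R u) (hR : 0 ≤ R)
    (hint : ∀ t, IntegrableOn (energyDensity u t) (Ioi (R + |t|))) : NoOutgoingFlux R u :=
  noOutgoingFlux_of_tendsto hR hint h.1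

lemma ExtEnergyVanishes.noOutgoingFlux_timeReverse (h : ExtEnergyVanishes R u) (hR : 0 ≤ R)
    (hint : ∀ t, IntegrableOn (energyDensity u t) (Ioi (R + |t|))) :
    NoOutgoingFlux R (timeReverse u) := by
  refine noOutgoingFlux_of_tendsto hR (fun t => ?_) ?_
  · simpa only [energyDensity_timeReverse, abs_neg] using hint (-t)
  · refine (h.2.comp tendsto_neg_atTop_atBot).congr fun t => ?_
    simp only [Function.comp_apply, energyDensity_timeReverse, abs_neg]
    rfl

namespace IsExtSol

lemma quadrantBound_of_noOutgoingFlux (hsol : IsExtSol p 2 m u) (hp : 5 ≤ p) (hm : 1 ≤ m)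
    (hε : 0 ≤ ε) (hε₁ : ε ≤ 1) (hu : ∀ t r, m + |t| < r → |u t r| ≤ ε / r)
    (hout : NoOutgoingFlux m u) (hin : NoOutgoingFlux m (_root_.timeReverse u))
    {m' : ℝ} (hm' : m < m') :
    QuadrantBound (nullA u) (nullB u) m' (4 * ε) := fun x y hx hy => by
  refine ⟨hsol.abs_nullA_le_of_noOutgoingFlux hp hm hε hε₁ hu hout (by linarith) (by linarith), ?_⟩
  have hrev := hsol.timeReverse.abs_nullA_le_of_noOutgoingFlux hp hm hε hε₁
    (fun t r hr => hu (-t) r (by rwa [abs_neg])) hin (hm'.trans_le hy) (hm'.trans_le hx)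
  rwa [nullA_timeReverse] at hrev

theorem exists_quadrantBound (hsol : IsExtSol p 2 R u) (hp : 5 ≤ p)
    (hdecay : ∀ ε > 0, ∀ᶠ ρ in atTop, ∀ t r, ρ + |t| < r → |u t r| ≤ ε / r)
    (hout : NoOutgoingFlux R u) (hin : NoOutgoingFlux R (_root_.timeReverse u)) :
    ∃ m₀, 1 ≤ m₀ ∧ R < m₀ ∧ (∀ t r, m₀ + |t| < r → |u t r| ≤ 1 / r) ∧
      ∀ m, m₀ < m → QuadrantBound (nullA u) (nullB u) m (22 / m ^ 2) := by
  have hsmall : ∀ m₀, 1 ≤ m₀ → R < m₀ → ∀ ε, 0 < ε → ε ≤ 1 →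
      (∀ t r, m₀ + |t| < r → |u t r| ≤ ε / r) →
      ∀ m, m₀ < m → QuadrantBound (nullA u) (nullB u) m (4 * ε) :=
    fun m₀ hm₀ hRm ε hε hε₁ hu m hm =>
      (hsol.mono hRm.le).quadrantBound_of_noOutgoingFlux hp hm₀ hε.le hε₁ hu
        (hout.mono hRm.le) (hin.mono hRm.le) hm
  obtain ⟨m₀, hu, hm₀, hRm⟩ := ((hdecay 1 one_pos).and
    ((eventually_ge_atTop 1).and (eventually_gt_atTop R))).exists
  refine ⟨m₀, hm₀, hRm, hu, fun m hm => ?_⟩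
  have hbound := ((hsol.mono hRm.le).isNullSystem (by linarith)).quadrantBound_of_source_le
    (N := 2) (by linarith) zero_le_two
    (fun x y hx hy => by simpa using abs_nullSource_le hp hm₀ le_rfl hu hx hy)
    (hsmall m₀ hm₀ hRm 1 one_pos le_rfl hu) (fun ε hε => ?_) hm
  · exact hbound.mono le_rfl (by ring_nf; rfl)
  · have hε' : 0 < min 1 (ε / 4) := lt_min one_pos (by positivity)
    obtain ⟨M, hM, hM₁, hRM⟩ := ((hdecay _ hε').and
      ((eventually_ge_atTop 1).and (eventually_gt_atTop R))).exists
    refine ⟨M + 1, (hsmall M hM₁ hRM _ hε' (min_le_left _ _) hM _ (lt_add_one M)).mono le_rfl ?_⟩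
    linarith [min_le_right 1 (ε / 4)]

theorem exists_quadrantBound_of_extEnergyVanishes (hsol : IsExtSol p 2 R u) (hp : 5 ≤ p)
    (hR : 0 ≤ R) {C : ℝ} (hdata : eH R (u 0) (dtu u 0) ≠ ⊤) (hLL : eLL 2 8 R u ≠ ⊤)
    (hsup : ∀ ρ, R ≤ ρ → supH ρ u ≤ ENNReal.ofReal C * eH ρ (u 0) (dtu u 0))
    (hvan : ExtEnergyVanishes R u) :
    ∃ m₀, 1 ≤ m₀ ∧ R < m₀ ∧ (∀ t r, m₀ + |t| < r → |u t r| ≤ 1 / r) ∧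
      ∀ m, m₀ < m → QuadrantBound (nullA u) (nullB u) m (22 / m ^ 2) := by
  have hint : ∀ t, IntegrableOn (energyDensity u t) (Ioi (R + |t|)) := fun t =>
    hsol.integrableOn_energyDensity hR <| ne_top_of_le_ne_top
      (ENNReal.mul_ne_top ENNReal.ofReal_ne_top hdata)
      ((le_iSup (fun t => eH (R + |t|) (u t) (dtu u t)) t).trans (hsup R le_rfl))
  refine hsol.exists_quadrantBound hp (fun ε hε => ?_) (hvan.noOutgoingFlux hR hint)
    (hvan.noOutgoingFlux_timeReverse hR hint)
  filter_upwards [eventually_forall_eH_le hdata hsup hε, eventually_ge_atTop R] with ρ hE hρ t r hr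
  exact hsol.abs_le_div_of_forall_eH_le hR two_pos (by norm_num) hLL hε hρ hE hr

end IsExtSol

end VanishingExteriorEnergy

/-! ### Stationarity -/

namespace IsNullSystem

variable {m₀ m μ : ℝ} {w a b g : ℝ → ℝ → ℝ}

lemma abs_timeShift_sub_le (S : IsNullSystem m₀ w a b g) (hm : m₀ < m) (hμ : QuadrantBound a b m μ)
    {x y h : ℝ} (hx : m + |h| ≤ x) (hy : m + |h| ≤ y) :
    |w (x - h) (y + h) - w x y| ≤ 2 * μ * |h| := by
  have hderiv : ∀ s ∈ Icc (-|h|) |h|, HasDerivWithinAt (fun s => w (x - s) (y + s))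
      (b (x - s) (y + s) - a (x - s) (y + s)) (Icc (-|h|) |h|) s := fun s hs =>
    (((S.hasPartialsAt (x - s) (y + s) (by linarith [hs.2]) (by linarith [hs.1])).comp_hasDerivAt
      ((hasDerivAt_id' s).const_sub x) ((hasDerivAt_id' s).const_add y)).congr_deriv
      (by ring)).hasDerivWithinAt
  have hbound : ∀ s ∈ Icc (-|h|) |h|, ‖b (x - s) (y + s) - a (x - s) (y + s)‖ ≤ 2 * μ := by
    intro s hs
    have hab := hμ (x - s) (y + s) (by linarith [hs.2]) (by linarith [hs.1])
    rw [Real.norm_eq_abs]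
    linarith [abs_sub (b (x - s) (y + s)) (a (x - s) (y + s)), hab.1, hab.2]
  simpa using (convex_Icc (-|h|) |h|).norm_image_sub_le_of_norm_hasDerivWithin_le hderiv hbound
    (x := 0) (y := h) ⟨by simp, by simp⟩ ⟨neg_abs_le h, le_abs_self h⟩

lemma tendsto_timeShift_sub (S : IsNullSystem m₀ w a b g)
    (hμ : ∀ m, m₀ < m → QuadrantBound a b m (μ / m ^ 2)) (x y h : ℝ) :
    Tendsto (fun t => w (x + t - h) (y + t + h) - w (x + t) (y + t)) atTop (nhds 0) := by
  set c := min x y - |h|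
  have hlim : Tendsto (fun t : ℝ => 2 * (μ / (c + t) ^ 2) * |h|) atTop (nhds (2 * 0 * |h|)) :=
    ((tendsto_const_nhds.div_atTop ((tendsto_pow_atTop two_ne_zero).comp
      (tendsto_atTop_add_const_left atTop c tendsto_id))).const_mul 2).mul_const |h|
  rw [mul_zero, zero_mul] at hlim
  refine squeeze_zero_norm' ?_ hlim
  filter_upwards [eventually_gt_atTop (m₀ - c)] with t ht
  have hx : c + |h| ≤ x := by linarith [min_le_left x y]
  have hy : c + |h| ≤ y := by linarith [min_le_right x y]
  exact S.abs_timeShift_sub_le (by linarith) (hμ (c + t) (by linarith)) (by linarith) (by linarith)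

lemma exists_tendsto_diagonal (S : IsNullSystem m₀ w a b g) (hm₀ : 0 < m₀)
    (hμ : ∀ m, m₀ < m → QuadrantBound a b m (μ / m ^ 2)) :
    ∃ l, Tendsto (fun r => w r r) atTop (nhds l) := by
  have hvar : ∀ r s, m₀ < r → r ≤ s → |w s s - w r r| ≤ 2 * μ / r := by
    intro r s hr hrs
    have hle := abs_sub_le_div_pow_of_abs_deriv_le (n := 1) (K := 2 * μ) le_rfl (hm₀.trans hr)
      (f := fun z => w z z) (f' := fun z => a z z + b z z)
      (fun z hz => ((S.hasPartialsAt z z (by linarith) (by linarith)).comp_hasDerivAt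
        (hasDerivAt_id z) (hasDerivAt_id z)).congr_deriv (by ring)) (fun z hz => ?_) hrs
    · simpa using hle
    · have hab := hμ z (by linarith) z z le_rfl le_rfl
      rw [mul_div_assoc]
      linarith [abs_add_le (a z z) (b z z), hab.1, hab.2]
  refine cauchySeq_tendsto_of_complete (Metric.cauchySeq_iff'.2 fun ε hε => ?_)
  have hlim : Tendsto (fun r : ℝ => 2 * μ / r) atTop (nhds 0) :=
    tendsto_const_nhds.div_atTop tendsto_id
  obtain ⟨r, hrε, hr⟩ := ((hlim.eventually_lt_const hε).and (eventually_gt_atTop m₀)).exists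
  exact ⟨r, fun s hs => (hvar r s hr hs).trans_lt hrε⟩

lemma tendsto_add_of_tendsto_diagonal (S : IsNullSystem m₀ w a b g)
    (hμ : ∀ m, m₀ < m → QuadrantBound a b m (μ / m ^ 2)) {l : ℝ}
    (hl : Tendsto (fun r => w r r) atTop (nhds l)) (x y : ℝ) :
    Tendsto (fun t => w (x + t) (y + t)) atTop (nhds l) := by
  have hdiag := hl.comp (tendsto_atTop_add_const_left atTop ((x + y) / 2) tendsto_id)
  have hsum := (S.tendsto_timeShift_sub hμ ((x + y) / 2) ((x + y) / 2) ((y - x) / 2)).add hdiag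
  rw [zero_add] at hsum
  refine hsum.congr fun t => ?_
  simp only [Function.comp_apply, id_eq, sub_add_cancel]
  congr 1 <;> ring

end IsNullSystem

section Stationarity

variable {p : ℕ} {u : ℝ → ℝ → ℝ} {m₀ : ℝ}

lemma nullW_sub_add (u : ℝ → ℝ → ℝ) (t r : ℝ) : nullW u (r - t) (r + t) = r ^ 2 * u t r := by
  rw [nullW, nullPull_sub_add]
  ring

lemma nullW_self (u : ℝ → ℝ → ℝ) (r : ℝ) : nullW u r r = r ^ 2 * u 0 r := by
  simpa using nullW_sub_add u 0 r

lemma abs_sq_mul_signedPow_sub_le {r s s' : ℝ} (hp : 5 ≤ p) (hr : 1 ≤ r) (hs : |s| ≤ 1 / r)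
    (hs' : |s'| ≤ 1 / r) :
    |r ^ 2 * signedPow p s / 4 - r ^ 2 * signedPow p s' / 4| ≤
      2 * p / (2 * r) ^ 3 * |r ^ 2 * s - r ^ 2 * s'| := by
  have hr₀ : 0 < r := by linarith
  have hpow : (1 / r) ^ (p - 1) ≤ 1 / r ^ 3 := by
    rw [← one_div_pow]
    exact pow_le_pow_of_le_one (by positivity) ((div_le_one hr₀).2 hr) (by lia)
  calc |r ^ 2 * signedPow p s / 4 - r ^ 2 * signedPow p s' / 4|
      = r ^ 2 / 4 * |signedPow p s - signedPow p s'| := by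
        rw [mul_div_right_comm, mul_div_right_comm, ← mul_sub, abs_mul,
          abs_of_pos (show 0 < r ^ 2 / 4 by positivity)]
    _ ≤ r ^ 2 / 4 * (p * (1 / r) ^ (p - 1) * |s - s'|) := by
        gcongr
        exact abs_signedPow_sub_le (by lia) hs hs'
    _ ≤ r ^ 2 / 4 * (p * (1 / r ^ 3) * |s - s'|) := by gcongr
    _ = 2 * p / (2 * r) ^ 3 * |r ^ 2 * s - r ^ 2 * s'| := by
        rw [← mul_sub, abs_mul, abs_of_pos (show 0 < r ^ 2 by positivity)]
        field_simp
        ring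

lemma dtu_eq_zero_of_eq_initial (hstat : ∀ h r, |h| ≤ 1 → m₀ < r → u h r = u 0 r) {t r : ℝ}
    (ht : |t| < 1) (hr : m₀ < r) : dtu u t r = 0 := by
  have hconst : (fun s => u s r) =ᶠ[nhds t] fun _ => u 0 r := by
    filter_upwards [continuous_abs.continuousAt.eventually_lt_const ht] with s hs
    exact hstat s r hs.le hr
  rw [dtu, hconst.deriv_eq, deriv_const]

namespace IsExtSol

theorem eq_initial_of_quadrantBound (hsol : IsExtSol p 2 m₀ u) (hp : 5 ≤ p) (hm₀ : 1 ≤ m₀)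
    (hu : ∀ t r, m₀ + |t| < r → |u t r| ≤ 1 / r)
    (hμ : ∀ m, m₀ < m → QuadrantBound (nullA u) (nullB u) m (22 / m ^ 2)) {h r : ℝ} (hh : |h| ≤ 1)
    (hr : 2 * (m₀ + 1) + 88 * p < r) : u h r = u 0 r := by
  obtain ⟨hlow, hupp⟩ := abs_le.1 hh
  have S := hsol.isNullSystem (by linarith)
  have Sdiff := ((S.timeShift h).mono (m := 2 * (m₀ + 1) + 88 * p) (by linarith)).sub
    (S.mono (by linarith))
  have hzero := Sdiff.eq_zero_of_source_le (D := 2 * p) (μ := 110) (by linarith) (by positivity)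
    (by linarith) (fun x y hx hy => ?_) (by norm_num) (fun m hm => ?_)
    (fun x y _ _ => S.tendsto_timeShift_sub hμ x y h) hr hr
  · rw [nullW_sub_add, nullW_self, ← mul_sub] at hzero
    exact sub_eq_zero.1 ((mul_eq_zero.1 hzero).resolve_left (pow_pos (by linarith) 2).ne')
  · have hs := hu _ _ (exterior_of_lt_of_lt (x := x - h) (y := y + h) (by linarith) (by linarith))
    have hs' := hu _ _ (exterior_of_lt_of_lt (x := x) (y := y) (by linarith) (by linarith))
    have hsum : x - h + (y + h) = x + y := by ring
    rw [hsum] at hs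
    have hlip := abs_sq_mul_signedPow_sub_le hp (by linarith) hs hs'
    rw [mul_div_cancel₀ (x + y) two_ne_zero] at hlip
    simpa only [nullSource, nullW, nullPull, hsum] using hlip
  · have hm_pos : 0 < m := by linarith
    have hshift : QuadrantBound (fun x y => nullA u (x - h) (y + h))
        (fun x y => nullB u (x - h) (y + h)) m (22 / (m / 2) ^ 2) := fun x y hx hy =>
      hμ (m / 2) (by linarith) _ _ (by linarith) (by linarith)
    refine (hshift.sub (hμ m (by linarith))).mono le_rfl (le_of_eq ?_)
    field_simp
    norm_num

theorem eq_zero_of_tendsto_zero (hsol : IsExtSol p 2 m₀ u) (hp : 5 ≤ p) (hm₀ : 1 ≤ m₀)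
    (hu : ∀ t r, m₀ + |t| < r → |u t r| ≤ 1 / r)
    (hμ : ∀ m, m₀ < m → QuadrantBound (nullA u) (nullB u) m (22 / m ^ 2))
    (hl : Tendsto (fun r => r ^ 2 * u 0 r) atTop (nhds 0)) {r : ℝ} (hr : m₀ + 88 * p < r) :
    u 0 r = 0 := by
  have S := hsol.isNullSystem (by linarith)
  have hdiag : Tendsto (fun r => nullW u r r) atTop (nhds 0) := by simpa only [nullW_self] using hl
  have hzero := (S.mono (by linarith)).eq_zero_of_source_le (m₀ := m₀ + 88 * p) (D := 2 * p)
    (μ := 22) (by linarith) (by positivity) (by linarith) (fun x y hx hy => ?_) (by norm_num)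
    (fun m hm => hμ m (by linarith))
    (fun x y _ _ => S.tendsto_add_of_tendsto_diagonal hμ hdiag x y) hr hr
  · rw [nullW_self] at hzero
    exact (mul_eq_zero.1 hzero).resolve_left (pow_pos (by linarith) 2).ne'
  · have hs := hu _ _ (exterior_of_lt_of_lt (x := x) (y := y) (by linarith) (by linarith))
    have hxy : 0 < (x + y) / 2 := by linarith
    have hlip := abs_sq_mul_signedPow_sub_le (s' := 0) hp (by linarith) hs
      (by rw [abs_zero]; positivity)
    rw [mul_div_cancel₀ (x + y) two_ne_zero] at hlip
    simpa [nullSource, nullW, nullPull, signedPow] using hlip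

lemma hasDerivAt_deriv_of_eq_initial (hsol : IsExtSol p 2 m₀ u)
    (hstat : ∀ h r, |h| ≤ 1 → m₀ < r → u h r = u 0 r) {r : ℝ} (hr : m₀ < r) :
    HasDerivAt (deriv (u 0)) (-(3 / r * deriv (u 0) r) - signedPow p (u 0 r)) r := by
  obtain ⟨utt, utr, urr, htt, hrr, heq⟩ :=
    hsol.exists_second_partials (t := 0) (r := r) (by simpa using hr)
  have hconst : (fun t => dtu u t r) =ᶠ[nhds 0] fun _ => 0 := by
    filter_upwards [continuous_abs.continuousAt.eventually_lt_const
      (abs_zero.trans_lt one_pos)] with t ht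
    exact dtu_eq_zero_of_eq_initial hstat ht hr
  have hutt : utt = 0 := by rw [← htt.hasDerivAt_left.deriv, hconst.deriv_eq, deriv_const]
  exact hrr.hasDerivAt_right.congr_deriv (by linarith)

end IsExtSol

end Stationarity

/-! ### Asymptotics of stationary solutions -/

section StationaryAsymptotics

variable {p : ℕ} {M K ℓ r : ℝ} {z z' : ℝ → ℝ}

lemma abs_signedPow_le_div_pow (hp : 1 ≤ p) {s : ℝ} (hs : |s| ≤ K / r ^ 2) :
    |signedPow p s| ≤ K ^ p / r ^ (2 * p) := by
  rw [abs_signedPow hp, pow_mul, ← div_pow]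
  exact pow_le_pow_left₀ (abs_nonneg s) hs p

lemma hasDerivAt_sq_mul (hz : HasDerivAt z (z' r) r) :
    HasDerivAt (fun r => r ^ 2 * z r) (2 * r * z r + r ^ 2 * z' r) r :=
  ((hasDerivAt_pow 2 r).fun_mul hz).congr_deriv (by simp)

lemma hasDerivAt_two_mul_add_mul (hr : r ≠ 0) (hz : HasDerivAt z (z' r) r)
    (hz' : HasDerivAt z' (-(3 / r * z' r) - signedPow p (z r)) r) :
    HasDerivAt (fun r => 2 * z r + r * z' r) (-(r * signedPow p (z r))) r := by
  refine ((hz.const_mul 2).fun_add ((hasDerivAt_id r).fun_mul hz')).congr_deriv ?_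
  simp only [id]
  field_simp
  ring

lemma abs_sq_mul_sub_limit_le_div_pow (hp : 3 ≤ p) (hM : 0 < M)
    (hz : ∀ r, M ≤ r → HasDerivAt z (z' r) r)
    (hz' : ∀ r, M ≤ r → HasDerivAt z' (-(3 / r * z' r) - signedPow p (z r)) r)
    (hzK : ∀ r, M ≤ r → |z r| ≤ K / r ^ 2)
    (hlim : Tendsto (fun r => r ^ 2 * z r) atTop (nhds ℓ))
    (hlim' : Tendsto (fun r => 2 * z r + r * z' r) atTop (nhds 0)) (hr : M ≤ r) :
    |r ^ 2 * z r - ℓ| ≤ K ^ p / r ^ (2 * p - 4) := by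
  have hfirst : ∀ r, M ≤ r → |2 * z r + r * z' r| ≤ K ^ p / r ^ (2 * p - 2) := by
    intro r hr
    have hle := abs_sub_limit_le_div_pow_of_abs_deriv_le (K := K ^ p) (n := 2 * p - 2) (by lia)
      (hM.trans_le hr)
      (fun s hs => hasDerivAt_two_mul_add_mul (by linarith) (hz s (by linarith))
        (hz' s (by linarith))) (fun s hs => ?_) hlim'
    · simpa using hle
    · have hs₀ : 0 < s := by linarith
      rw [abs_neg, abs_mul, abs_of_pos hs₀]
      calc s * |signedPow p (z s)| ≤ s * (K ^ p / s ^ (2 * p)) := by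
            gcongr
            exact abs_signedPow_le_div_pow (by lia) (hzK s (by linarith))
        _ = K ^ p / s ^ (2 * p - 2 + 1) := by
            rw [show 2 * p = 2 * p - 2 + 1 + 1 by lia, pow_succ]
            field_simp
            congr 2
  refine abs_sub_limit_le_div_pow_of_abs_deriv_le (by lia) (hM.trans_le hr)
    (fun s hs => hasDerivAt_sq_mul (hz s (hr.trans hs))) (fun s hs => ?_) hlim
  have hs₀ : 0 < s := by linarith
  calc |2 * s * z s + s ^ 2 * z' s| = s * |2 * z s + s * z' s| := by
        rw [← abs_of_pos hs₀, ← abs_mul, abs_of_pos hs₀]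
        ring_nf
    _ ≤ s * (K ^ p / s ^ (2 * p - 2)) := by gcongr; exact hfirst s (hr.trans hs)
    _ = K ^ p / s ^ (2 * p - 4 + 1) := by
        rw [show 2 * p - 2 = 2 * p - 4 + 1 + 1 by lia, pow_succ]
        field_simp

theorem exists_abs_sq_mul_sub_limit_le_rpow (hp : 3 ≤ p)
    (hz : ∀ᶠ r in atTop, HasDerivAt z (z' r) r)
    (hz' : ∀ᶠ r in atTop, HasDerivAt z' (-(3 / r * z' r) - signedPow p (z r)) r)
    (hlim : Tendsto (fun r => r ^ 2 * z r) atTop (nhds ℓ))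
    (hlim' : Tendsto (fun r => 2 * z r + r * z' r) atTop (nhds 0)) :
    ∃ C > 0, ∀ᶠ r in atTop, |r ^ 2 * z r - ℓ| ≤ C * r ^ ((4 : ℝ) - 2 * p) := by
  have hbound := hlim.abs.eventually_lt_const (lt_add_one |ℓ|)
  obtain ⟨M, hM⟩ := eventually_atTop.1 (hz.and (hz'.and (hbound.and (eventually_gt_atTop 0))))
  have hdecay : ∀ r, M ≤ r → |z r| ≤ (|ℓ| + 1) / r ^ 2 := fun r hr => by
    have hr₀ : 0 < r := (hM r hr).2.2.2
    have hlt := (hM r hr).2.2.1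
    rw [abs_mul, abs_of_pos (pow_pos hr₀ 2), mul_comm] at hlt
    exact (le_div_iff₀ (by positivity)).2 hlt.le
  refine ⟨(|ℓ| + 1) ^ p, by positivity, eventually_atTop.2 ⟨M, fun r hr => ?_⟩⟩
  have hr₀ : 0 < r := (hM r hr).2.2.2
  refine (abs_sq_mul_sub_limit_le_div_pow hp (hM M le_rfl).2.2.2 (fun r hr => (hM r hr).1)
    (fun r hr => (hM r hr).2.1) hdecay hlim hlim' hr).trans_eq ?_
  rw [div_eq_mul_inv, ← Real.rpow_natCast r, ← Real.rpow_neg hr₀.le, Nat.cast_sub (by lia)]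
  push_cast
  ring_nf

end StationaryAsymptotics

/-! ### Backward continuation of stationary solutions -/

section StationaryODE

open scoped NNReal

variable {f φ : ℝ → ℝ} {y y₁ y₂ : ℝ → ℝ × ℝ} {s : Set ℝ} {ε M R r P : ℝ}

lemma exists_hasDerivWithinAt_Icc_of_lipschitzWith_of_bounded {E : Type*} [NormedAddCommGroup E]
    [NormedSpace ℝ E] [CompleteSpace E] {v : ℝ → E → E} {a b : ℝ} {K L : ℝ≥0}
    (hlip : ∀ t ∈ Icc a b, LipschitzWith K (v t)) (hcont : ∀ x, ContinuousOn (v · x) (Icc a b))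
    (hbd : ∀ t ∈ Icc a b, ∀ x, ‖v t x‖ ≤ L) (t₀ : Icc a b) (x₀ : E) :
    ∃ α : ℝ → E, α t₀ = x₀ ∧ ∀ t ∈ Icc a b, HasDerivWithinAt α (v t (α t)) (Icc a b) t := by
  have hab : 0 ≤ b - a := sub_nonneg.2 (t₀.2.1.trans t₀.2.2)
  have hPL : IsPicardLindelof v t₀ x₀ (L * (b - a).toNNReal) 0 L K :=
    { lipschitzOnWith := fun t ht => (hlip t ht).lipschitzOnWith
      continuousOn := fun x _ => hcont x
      norm_le := fun t ht x _ => hbd t ht x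
      mul_max_le := by
        rw [NNReal.coe_mul, Real.coe_toNNReal _ hab, NNReal.coe_zero, sub_zero]
        have := t₀.2.1
        have := t₀.2.2
        gcongr
        exact max_le (by linarith) (by linarith) }
  exact hPL.exists_eq_forall_mem_Icc_hasDerivWithinAt₀

/-- Projection of the real line onto `[-K, K]`, used to truncate nonlinearities. -/
noncomputable def clip (K x : ℝ) : ℝ := max (-K) (min K x)

lemma abs_clip_le {K : ℝ} (hK : 0 ≤ K) (x : ℝ) : |clip K x| ≤ K :=
  abs_le.2 ⟨le_max_left _ _, max_le (by linarith) (min_le_left _ _)⟩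

lemma clip_eq_self {K x : ℝ} (hx : |x| ≤ K) : clip K x = x := by
  rw [clip, min_eq_right (abs_le.1 hx).2, max_eq_right (abs_le.1 hx).1]

lemma lipschitzWith_clip (K : ℝ) : LipschitzWith 1 (clip K) :=
  (LipschitzWith.id.const_min K).const_max (-K)

lemma comp_clip_mul_self_nonneg {K : ℝ} (hK : 0 < K) (hf : ∀ x, 0 ≤ f x * x) (x : ℝ) :
    0 ≤ f (clip K x) * x := by
  rcases le_total |x| K with hx | hx
  · rw [clip_eq_self hx]
    exact hf x
  rcases le_abs'.1 hx with hx | hx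
  · have hclip : clip K x = -K := by rw [clip, max_eq_left (min_le_of_right_le hx)]
    rw [hclip]
    nlinarith [hf (-K)]
  · have hclip : clip K x = K := by rw [clip, min_eq_left hx, max_eq_right (by linarith)]
    rw [hclip]
    nlinarith [hf K]

lemma exists_lipschitzWith_comp_clip (hf : LocallyLipschitz f) {K : ℝ} (hK : 0 ≤ K) :
    ∃ Λ, LipschitzWith Λ fun x => f (clip K x) := by
  obtain ⟨Λ, hΛ⟩ := (hf.locallyLipschitzOn (s := Icc (-K) K)).exists_lipschitzOnWith_of_compact
    isCompact_Icc
  refine ⟨Λ * 1, lipschitzOnWith_univ.1 ?_⟩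
  exact hΛ.comp (lipschitzWith_clip K).lipschitzOnWith fun x _ => abs_le.1 (abs_clip_le hK x)

/-- Right-hand side of the first-order form of `(r³ z')' + r³ φ(z) = 0`, in the unknowns
`(z, r³ z')`. -/
noncomputable def radialField (φ : ℝ → ℝ) (r : ℝ) (x : ℝ × ℝ) : ℝ × ℝ :=
  (x.2 / r ^ 3, -(r ^ 3 * φ x.1))

/-- `y = (z, r³ z')` solves the radial stationary equation `z'' + (3/r) z' + φ(z) = 0` in `ℝ⁴`
on the set `s` of radii. -/
def IsRadialSol (φ : ℝ → ℝ) (s : Set ℝ) (y : ℝ → ℝ × ℝ) : Prop :=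
  ∀ r ∈ s, HasDerivWithinAt y (radialField φ r (y r)) s r

lemma exists_lipschitzWith_radialField {Λ : ℝ≥0} (hφ : LipschitzWith Λ φ) (hε : 0 < ε) (R : ℝ) :
    ∃ K, ∀ r ∈ Icc ε R, LipschitzWith K (radialField φ r) := by
  refine ⟨max (1 / ε ^ 3).toNNReal ((R ^ 3).toNNReal * Λ), fun r ⟨hεr, hrR⟩ => ?_⟩
  have hr : 0 < r := hε.trans_le hεr
  have hR : 0 < R := hr.trans_le hrR
  refine LipschitzWith.prodMk (.of_dist_le_mul fun x x' => ?_) (.of_dist_le_mul fun x x' => ?_)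
  · have hsnd : |x.2 - x'.2| ≤ dist x x' := le_max_right _ _
    rw [Real.coe_toNNReal _ (by positivity), Real.dist_eq, ← sub_div, abs_div,
      abs_of_pos (pow_pos hr 3), one_div_mul_eq_div]
    gcongr
  · have hfst : |φ x.1 - φ x'.1| ≤ Λ * dist x x' :=
      (hφ.dist_le_mul x.1 x'.1).trans (by gcongr; exact le_max_left _ _)
    rw [NNReal.coe_mul, Real.coe_toNNReal _ (by positivity), Real.dist_eq, neg_sub_neg,
      ← mul_sub, abs_mul, abs_of_pos (pow_pos hr 3), abs_sub_comm, mul_assoc]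
    gcongr

lemma continuousOn_radialField (φ : ℝ → ℝ) (hε : 0 < ε) (x : ℝ × ℝ) :
    ContinuousOn (fun r => radialField φ r x) (Icc ε R) := by
  refine .prodMk (continuousOn_const.div (by fun_prop) fun r hr => ?_) (by fun_prop)
  exact (pow_pos (hε.trans_le hr.1) 3).ne'

lemma abs_radialField_fst_le {K : ℝ} {x : ℝ × ℝ} (hε : 0 < ε) (hr : ε ≤ r) (hx : |x.2| ≤ K) :
    |(radialField φ r x).1| ≤ K / ε ^ 3 := by
  have hr0 : 0 < r := hε.trans_le hr
  have hK : 0 ≤ K := (abs_nonneg _).trans hx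
  rw [radialField, abs_div, abs_of_pos (pow_pos hr0 3)]
  gcongr

lemma abs_radialField_snd_le {x : ℝ × ℝ} (hr : 0 < r) (hrR : r ≤ R) (hx : |φ x.1| ≤ P) :
    |(radialField φ r x).2| ≤ R ^ 3 * P := by
  have hR : 0 < R := hr.trans_le hrR
  rw [radialField, abs_neg, abs_mul, abs_of_pos (pow_pos hr 3)]
  gcongr

namespace IsRadialSol

lemma fst (h : IsRadialSol φ s y) (hr : r ∈ s) :
    HasDerivWithinAt (fun r => (y r).1) ((y r).2 / r ^ 3) s r :=
  (ContinuousLinearMap.fst ℝ ℝ ℝ).hasFDerivAt.comp_hasDerivWithinAt r (h r hr)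

lemma snd (h : IsRadialSol φ s y) (hr : r ∈ s) :
    HasDerivWithinAt (fun r => (y r).2) (-(r ^ 3 * φ (y r).1)) s r :=
  (ContinuousLinearMap.snd ℝ ℝ ℝ).hasFDerivAt.comp_hasDerivWithinAt r (h r hr)

lemma continuousOn (h : IsRadialSol φ s y) : ContinuousOn y s :=
  fun r hr => (h r hr).continuousWithinAt

lemma mono {t : Set ℝ} (h : IsRadialSol φ s y) (hts : t ⊆ s) : IsRadialSol φ t y :=
  fun r hr => (h r (hts hr)).mono hts

lemma congr_source (h : IsRadialSol φ s y) (hf : ∀ r ∈ s, φ (y r).1 = f (y r).1) :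
    IsRadialSol f s y := fun r hr => by
  simpa only [radialField, hf r hr] using h r hr

lemma abs_fst_sub_le {S : ℝ} (h : IsRadialSol φ (Icc ε R) y) (hε : 0 < ε)
    (hS : ∀ r ∈ Icc ε R, |(y r).2| ≤ S) (hr : r ∈ Icc ε R) :
    |(y r).1 - (y R).1| ≤ S / ε ^ 3 * R := by
  have hslope : ∀ x ∈ Icc ε R, ‖(y x).2 / x ^ 3‖ ≤ S / ε ^ 3 := fun x hx =>
    abs_radialField_fst_le (φ := φ) hε hx.1 (hS x hx)
  refine ((convex_Icc ε R).norm_image_sub_le_of_norm_hasDerivWithin_le (fun x hx => h.fst hx)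
    hslope (right_mem_Icc.2 (hr.1.trans hr.2)) hr).trans ?_
  have hnonneg : 0 ≤ S / ε ^ 3 := (norm_nonneg _).trans (hslope r hr)
  gcongr
  rw [Real.norm_eq_abs, abs_sub_comm, abs_of_nonneg (sub_nonneg.2 hr.2)]
  linarith [hr.1]

theorem eq_of_eq_right (hf : LocallyLipschitz f) (hε : 0 < ε) (hεR : ε ≤ R)
    (h₁ : IsRadialSol f (Icc ε R) y₁) (h₂ : IsRadialSol f (Icc ε R) y₂) (heq : y₁ R = y₂ R) :
    y₁ ε = y₂ ε := by
  obtain ⟨K₁, hK₁⟩ := isCompact_Icc.exists_bound_of_continuousOn h₁.continuousOn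
  obtain ⟨K₂, hK₂⟩ := isCompact_Icc.exists_bound_of_continuousOn h₂.continuousOn
  have hclip : ∀ {y : ℝ → ℝ × ℝ}, IsRadialSol f (Icc ε R) y →
      (∀ r ∈ Icc ε R, ‖y r‖ ≤ max K₁ K₂) →
      IsRadialSol (fun x => f (clip (max K₁ K₂) x)) (Icc ε R) y := fun hy hK =>
    hy.congr_source fun r hr => by rw [clip_eq_self ((norm_fst_le _).trans (hK r hr))]
  have hK₀ : 0 ≤ max K₁ K₂ :=
    (norm_nonneg _).trans ((hK₁ R (right_mem_Icc.2 hεR)).trans (le_max_left _ _))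
  obtain ⟨Λ, hΛ⟩ := exists_lipschitzWith_comp_clip hf hK₀
  obtain ⟨L, hL⟩ := exists_lipschitzWith_radialField hΛ hε R
  have hleft : ∀ {y : ℝ → ℝ × ℝ}, IsRadialSol (fun x => f (clip (max K₁ K₂) x)) (Icc ε R) y →
      ∀ r ∈ Ioc ε R, HasDerivWithinAt y (radialField (fun x => f (clip (max K₁ K₂) x)) r (y r))
        (Iic r) r := fun hy r hr =>
    (hy r (Ioc_subset_Icc_self hr)).mono_of_mem_nhdsWithin (Icc_mem_nhdsLE_of_mem hr)
  exact ODE_solution_unique_of_mem_Icc_left (s := fun _ => univ)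
    (fun r hr => (hL r (Ioc_subset_Icc_self hr)).lipschitzOnWith)
    h₁.continuousOn (hleft (hclip h₁ fun r hr => (hK₁ r hr).trans (le_max_left _ _)))
    (fun _ _ => mem_univ _)
    h₂.continuousOn (hleft (hclip h₂ fun r hr => (hK₂ r hr).trans (le_max_right _ _)))
    (fun _ _ => mem_univ _) heq (left_mem_Icc.2 hεR)

end IsRadialSol

lemma exists_isRadialSol_Icc_of_bounded {Λ : ℝ≥0} (hφ : LipschitzWith Λ φ) (hP : ∀ x, |φ x| ≤ P)
    (hε : 0 < ε) (hεR : ε ≤ R) (x₀ : ℝ × ℝ) : ∃ y, y R = x₀ ∧ IsRadialSol φ (Icc ε R) y := by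
  have hR : 0 < R := hε.trans_le hεR
  have hP0 : 0 ≤ P := (abs_nonneg _).trans (hP 0)
  set K : ℝ := |x₀.2| + R ^ 3 * P * R with hK
  have hK0 : 0 ≤ K := by positivity
  obtain ⟨L, hL⟩ := exists_lipschitzWith_radialField hφ hε R
  have hclip : LipschitzWith 1 fun x : ℝ × ℝ => (x.1, clip K x.2) := by
    simpa using LipschitzWith.prod_fst.prodMk ((lipschitzWith_clip K).comp LipschitzWith.prod_snd)
  have hbd : ∀ r ∈ Icc ε R, ∀ x : ℝ × ℝ, ‖radialField φ r (x.1, clip K x.2)‖ ≤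
      (max (K / ε ^ 3) (R ^ 3 * P)).toNNReal := fun r ⟨hεr, hrR⟩ x => by
    rw [Real.coe_toNNReal _ (le_max_of_le_left (by positivity))]
    exact max_le_max (abs_radialField_fst_le hε hεr (abs_clip_le hK0 _))
      (abs_radialField_snd_le (hε.trans_le hεr) hrR (hP _))
  obtain ⟨y, hyR, hy⟩ := exists_hasDerivWithinAt_Icc_of_lipschitzWith_of_bounded
    (fun r hr => (hL r hr).comp hclip) (fun x => continuousOn_radialField φ hε _) hbd
    ⟨R, right_mem_Icc.2 hεR⟩ x₀
  have hsnd : ∀ r ∈ Icc ε R, |(y r).2| ≤ K := fun r hr => by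
    have hdiff := (convex_Icc ε R).norm_image_sub_le_of_norm_hasDerivWithin_le
      (fun x hx => (ContinuousLinearMap.snd ℝ ℝ ℝ).hasFDerivAt.comp_hasDerivWithinAt x (hy x hx))
      (fun x hx => abs_radialField_snd_le (hε.trans_le hx.1) hx.2 (hP _))
      (right_mem_Icc.2 hεR) hr
    have hlen : ‖r - R‖ ≤ R := abs_le.2 ⟨by linarith [hε.trans_le hr.1], by linarith [hr.2]⟩
    calc |(y r).2| ≤ |(y R).2| + |(y r).2 - (y R).2| := by
          linarith [abs_sub_abs_le_abs_sub (y r).2 (y R).2]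
      _ ≤ |(y R).2| + R ^ 3 * P * ‖r - R‖ := by gcongr; exact hdiff
      _ ≤ K := by rw [hyR, hK]; gcongr
  refine ⟨y, hyR, fun r hr => ?_⟩
  simpa only [Function.comp_apply, clip_eq_self (hsnd r hr)] using hy r hr

lemma integral_nonneg_of_mul_self_nonneg (hφ : ∀ x, 0 ≤ φ x * x) (x : ℝ) :
    0 ≤ ∫ s in (0 : ℝ)..x, φ s := by
  have hscale : ∫ s in (0 : ℝ)..x, φ s = ∫ s in (0 : ℝ)..1, x * φ (x * s) := by
    have := intervalIntegral.smul_integral_comp_mul_left (a := 0) (b := 1) φ x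
    rw [mul_zero, mul_one] at this
    rw [← this, smul_eq_mul, intervalIntegral.integral_const_mul]
  rw [hscale, intervalIntegral.integral_of_le zero_le_one]
  refine setIntegral_nonneg measurableSet_Ioc fun s hs => ?_
  refine nonneg_of_mul_nonneg_left ?_ hs.1
  linarith [hφ (x * s)]

/-- The quantity `q²/2 + r⁶ ∫₀ᶻ φ` along `(z, q) = (z, r³ z')`; its derivative is `6 r⁵ ∫₀ᶻ φ`,
so it controls `(z, q)` towards smaller radii when `0 ≤ φ(x) x`. -/
noncomputable def radialEnergy (φ : ℝ → ℝ) (y : ℝ → ℝ × ℝ) (r : ℝ) : ℝ :=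
  (y r).2 ^ 2 / 2 + r ^ 6 * ∫ s in (0 : ℝ)..(y r).1, φ s

namespace IsRadialSol

lemma monotoneOn_radialEnergy (h : IsRadialSol φ (Icc ε R) y) (hε : 0 < ε) (hφ : Continuous φ)
    (hsign : ∀ x, 0 ≤ φ x * x) : MonotoneOn (radialEnergy φ y) (Icc ε R) := by
  have hderiv : ∀ r ∈ Icc ε R, HasDerivWithinAt (radialEnergy φ y)
      (6 * r ^ 5 * ∫ s in (0 : ℝ)..(y r).1, φ s) (Icc ε R) r := fun r hr => by
    have : r ≠ 0 := (hε.trans_le hr.1).ne'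
    have hprim := (hφ.integral_hasStrictDerivAt 0 (y r).1).hasDerivAt.comp_hasDerivWithinAt r
      (h.fst hr)
    refine ((((h.snd hr).fun_pow 2).div_const 2).fun_add
      ((hasDerivAt_pow 6 r).hasDerivWithinAt.fun_mul hprim)).congr_deriv ?_
    simp only [Function.comp_apply]
    field_simp
    push_cast
    ring
  refine monotoneOn_of_hasDerivWithinAt_nonneg (convex_Icc ε R)
    (fun r hr => (hderiv r hr).continuousWithinAt)
    (fun r hr => (hderiv r (interior_subset hr)).mono interior_subset) fun r hr => ?_
  have hr0 : 0 < r := hε.trans_le (interior_subset hr).1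
  have := integral_nonneg_of_mul_self_nonneg hsign (y r).1
  positivity

lemma abs_snd_le (h : IsRadialSol φ (Icc ε R) y) (hε : 0 < ε) (hφ : Continuous φ)
    (hsign : ∀ x, 0 ≤ φ x * x) (hr : r ∈ Icc ε R) : |(y r).2| ≤ √(2 * radialEnergy φ y R) := by
  have hmono := h.monotoneOn_radialEnergy hε hφ hsign hr (right_mem_Icc.2 (hr.1.trans hr.2)) hr.2
  have hr0 : 0 < r := hε.trans_le hr.1
  have hpot : 0 ≤ r ^ 6 * ∫ s in (0 : ℝ)..(y r).1, φ s :=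
    mul_nonneg (by positivity) (integral_nonneg_of_mul_self_nonneg hsign _)
  refine Real.abs_le_sqrt ?_
  rw [radialEnergy] at hmono
  linarith

end IsRadialSol

theorem exists_isRadialSol_Icc (hf : LocallyLipschitz f) (hsign : ∀ x, 0 ≤ f x * x)
    (hε : 0 < ε) (hεR : ε ≤ R) (x₀ : ℝ × ℝ) : ∃ y, y R = x₀ ∧ IsRadialSol f (Icc ε R) y := by
  have hR : 0 < R := hε.trans_le hεR
  set S : ℝ := √(2 * radialEnergy f (fun _ => x₀) R) with hS
  set K : ℝ := |x₀.1| + S / ε ^ 3 * R + 1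
  have hK0 : 0 < K := by positivity
  obtain ⟨Λ, hΛ⟩ := exists_lipschitzWith_comp_clip hf hK0.le
  obtain ⟨P, hP⟩ := isCompact_Icc.exists_bound_of_continuousOn (s := Icc (-K) K)
    hf.continuous.continuousOn
  obtain ⟨y, hyR, hy⟩ := exists_isRadialSol_Icc_of_bounded hΛ
    (fun x => hP _ (abs_le.1 (abs_clip_le hK0.le x))) hε hεR x₀
  have henergy : radialEnergy (fun x => f (clip K x)) y R = radialEnergy f (fun _ => x₀) R := by
    have hsmall : ∀ s ∈ uIcc 0 x₀.1, |s| ≤ K := fun s hs => by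
      have hle := abs_sub_left_of_mem_uIcc hs
      have : 0 ≤ S / ε ^ 3 * R := by positivity
      simp only [sub_zero] at hle
      linarith
    simp only [radialEnergy, hyR]
    congr 2
    exact intervalIntegral.integral_congr fun s hs => congrArg f (clip_eq_self (hsmall s hs))
  refine ⟨y, hyR, hy.congr_source fun r hr => ?_⟩
  have hsnd : ∀ r ∈ Icc ε R, |(y r).2| ≤ S := fun r hr => by
    rw [hS, ← henergy]
    exact hy.abs_snd_le hε hΛ.continuous (comp_clip_mul_self_nonneg hK0 hsign) hr
  have hfst := hy.abs_fst_sub_le hε hsnd hr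
  rw [hyR] at hfst
  rw [clip_eq_self]
  linarith [abs_sub_abs_le_abs_sub (y r).1 x₀.1]

theorem IsRadialSol.exists_extension (h : IsRadialSol f (Ioi M) y) (hf : LocallyLipschitz f)
    (hsign : ∀ x, 0 ≤ f x * x) (hM : 0 ≤ M) :
    ∃ Y, IsRadialSol f (Ioi 0) Y ∧ EqOn Y y (Ioi M) := by
  obtain ⟨R, hMR⟩ := exists_gt M
  choose! W hWR hW using fun ε (hε : 0 < ε ∧ ε ≤ R) =>
    exists_isRadialSol_Icc hf hsign hε.1 hε.2 (y R)
  set Y : ℝ → ℝ × ℝ := fun r => if r < R then W (r / 2) r else y r with hYdef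
  have hYy : EqOn Y y (Ioi M) := fun r (hr : M < r) => by
    have hr0 : 0 < r := hM.trans_lt hr
    by_cases hrR : r < R
    · have hhalf : 0 < r / 2 ∧ r / 2 ≤ R := ⟨by linarith, by linarith⟩
      simp only [hYdef, if_pos hrR]
      exact ((hW _ hhalf).mono (Icc_subset_Icc_left (by linarith))).eq_of_eq_right hf hr0 hrR.le
        (h.mono fun s hs => hr.trans_le hs.1) (hWR _ hhalf)
    · exact if_neg hrR
  have hYW : ∀ ε, 0 < ε → EqOn Y (W ε) (Ioo ε R) := fun ε hε r ⟨hεr, hrR⟩ => by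
    have hhalf : 0 < r / 2 ∧ r / 2 ≤ R := ⟨by linarith, by linarith⟩
    have hεR : 0 < ε ∧ ε ≤ R := ⟨hε, by linarith⟩
    simp only [hYdef, if_pos hrR]
    exact ((hW _ hhalf).mono (Icc_subset_Icc_left (by linarith))).eq_of_eq_right hf (by linarith)
      hrR.le ((hW _ hεR).mono (Icc_subset_Icc_left hεr.le)) ((hWR _ hhalf).trans (hWR _ hεR).symm)
  refine ⟨Y, fun r (hr : 0 < r) => HasDerivAt.hasDerivWithinAt ?_, hYy⟩
  by_cases hrR : r < R
  · have hhalf : 0 < r / 2 ∧ r / 2 ≤ R := ⟨by linarith, by linarith⟩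
    have hmem : r ∈ Ioo (r / 2) R := ⟨by linarith, hrR⟩
    have hnhds : Ioo (r / 2) R ∈ nhds r := isOpen_Ioo.mem_nhds hmem
    rw [hYW _ hhalf.1 hmem]
    exact ((hW _ hhalf r (Ioo_subset_Icc_self hmem)).hasDerivAt
      (mem_of_superset hnhds Ioo_subset_Icc_self)).congr_of_eventuallyEq
      ((hYW _ hhalf.1).eventuallyEq_of_mem hnhds)
  · have hMr : M < r := hMR.trans_le (not_lt.1 hrR)
    rw [hYy hMr]
    exact ((h r hMr).hasDerivAt (Ioi_mem_nhds hMr)).congr_of_eventuallyEq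
      (hYy.eventuallyEq_of_mem (Ioi_mem_nhds hMr))

end StationaryODE

section StationaryData

variable {f : ℝ → ℝ} {y : ℝ → ℝ × ℝ} {M r ℓ : ℝ} {p : ℕ} {u : ℝ → ℝ → ℝ} {m₀ : ℝ}
  {z z' : ℝ → ℝ}

lemma isRadialSol_of_hasDerivAt (hM : 0 ≤ M) (hz : ∀ r, M < r → HasDerivAt z (z' r) r)
    (hz' : ∀ r, M < r → HasDerivAt z' (-(3 / r * z' r) - f (z r)) r) :
    IsRadialSol f (Ioi M) fun r => (z r, r ^ 3 * z' r) := fun r (hr : M < r) => by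
  have hr0 : r ≠ 0 := (hM.trans_lt hr).ne'
  refine (((hz r hr).congr_deriv ?_).prodMk
    (((hasDerivAt_pow 3 r).fun_mul (hz' r hr)).congr_deriv ?_)).hasDerivWithinAt
  · field_simp
  · field_simp
    push_cast
    ring

namespace IsRadialSol

lemma hasDerivAt_fst (h : IsRadialSol f (Ioi 0) y) (hr : 0 < r) :
    HasDerivAt (fun r => (y r).1) ((y r).2 / r ^ 3) r :=
  (h.fst hr).hasDerivAt (Ioi_mem_nhds hr)

lemma hasDerivAt_deriv_fst (h : IsRadialSol f (Ioi 0) y) (hr : 0 < r) :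
    HasDerivAt (deriv fun r => (y r).1) (-(3 * (y r).2 / r ^ 4) - f (y r).1) r := by
  have hderiv : (deriv fun r => (y r).1) =ᶠ[nhds r] fun r => (y r).2 / r ^ 3 := by
    filter_upwards [Ioi_mem_nhds hr] with s hs using (h.hasDerivAt_fst hs).deriv
  refine ((((h.snd hr).hasDerivAt (Ioi_mem_nhds hr)).fun_div (hasDerivAt_pow 3 r)
    (by positivity)).congr_of_eventuallyEq hderiv).congr_deriv ?_
  push_cast
  field_simp
  ring

lemma deriv_deriv_fst_add_eq_zero (h : IsRadialSol f (Ioi 0) y) (hr : 0 < r) :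
    deriv (deriv fun r => (y r).1) r + 3 / r * deriv (fun r => (y r).1) r + f (y r).1 = 0 := by
  rw [(h.hasDerivAt_deriv_fst hr).deriv, (h.hasDerivAt_fst hr).deriv]
  field_simp
  ring

lemma contDiffOn_fst (h : IsRadialSol f (Ioi 0) y) (hf : Continuous f) :
    ContDiffOn ℝ 2 (fun r => (y r).1) (Ioi 0) := by
  have hcont : ContinuousOn (fun r => -(3 * (y r).2 / r ^ 4) - f (y r).1) (Ioi 0) :=
    ((h.continuousOn.snd.const_mul 3).div (by fun_prop) fun r (hr : 0 < r) => by
      positivity).neg.sub (hf.comp_continuousOn h.continuousOn.fst)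
  rw [show (2 : WithTop ℕ∞) = 1 + 1 by norm_num, contDiffOn_succ_iff_deriv_of_isOpen isOpen_Ioi]
  refine ⟨fun r hr => (h.hasDerivAt_fst hr).differentiableAt.differentiableWithinAt, by simp, ?_⟩
  rw [← zero_add 1, contDiffOn_succ_iff_deriv_of_isOpen isOpen_Ioi, contDiffOn_zero]
  exact ⟨fun r hr => (h.hasDerivAt_deriv_fst hr).differentiableAt.differentiableWithinAt, by simp,
    hcont.congr fun r hr => (h.hasDerivAt_deriv_fst hr).deriv⟩

end IsRadialSol

/-- `Z` is a singular stationary solution `Z_ℓ`: a `C²` solution of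
`Z'' + (3/r) Z' + |Z|^(p-1) Z = 0` on `(0, ∞)` with `r² Z = ℓ + O(r^(4-2p))` at infinity. -/
def IsSingularStationary (p : ℕ) (ℓ : ℝ) (Z : ℝ → ℝ) : Prop :=
  ContDiffOn ℝ 2 Z (Ioi 0) ∧
  (∀ r, 0 < r → deriv (deriv Z) r + 3 / r * deriv Z r + |Z r| ^ (p - 1) * Z r = 0) ∧
  ∃ C > 0, ∃ r₁, ∀ r, r₁ ≤ r → |r ^ 2 * Z r - ℓ| ≤ C * r ^ ((4 : ℝ) - 2 * p)

theorem exists_isSingularStationary (hp : 3 ≤ p) (hM : 0 ≤ M)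
    (hz : ∀ r, M < r → HasDerivAt z (z' r) r)
    (hz' : ∀ r, M < r → HasDerivAt z' (-(3 / r * z' r) - signedPow p (z r)) r)
    (hlim : Tendsto (fun r => r ^ 2 * z r) atTop (nhds ℓ))
    (hlim' : Tendsto (fun r => 2 * z r + r * z' r) atTop (nhds 0)) :
    ∃ Z, IsSingularStationary p ℓ Z ∧ EqOn z Z (Ioi M) := by
  have hlip : LocallyLipschitz (signedPow p) := locallyLipschitz_signedPow (by lia)
  obtain ⟨Y, hY, hYz⟩ := (isRadialSol_of_hasDerivAt hM hz hz').exists_extension hlip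
    (signedPow_mul_self_nonneg p) hM
  have hZ : EqOn z (fun r => (Y r).1) (Ioi M) := fun r hr => (congrArg Prod.fst (hYz hr)).symm
  obtain ⟨C, hC, hasymp⟩ := exists_abs_sq_mul_sub_limit_le_rpow hp
    ((eventually_gt_atTop M).mono hz) ((eventually_gt_atTop M).mono hz') hlim hlim'
  obtain ⟨r₁, hr₁⟩ := eventually_atTop.1 (hasymp.and (eventually_gt_atTop M))
  refine ⟨fun r => (Y r).1, ⟨hY.contDiffOn_fst hlip.continuous,
    fun r hr => hY.deriv_deriv_fst_add_eq_zero hr, C, hC, r₁, fun r hr => ?_⟩, hZ⟩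
  rw [← hZ (hr₁ r hr).2]
  exact (hr₁ r hr).1

lemma nullA_add_nullB_self (u : ℝ → ℝ → ℝ) (r : ℝ) :
    nullA u r r + nullB u r r = r * (2 * u 0 r + r * deriv (u 0) r) := by
  simp only [nullA, nullB, nullPull, sub_self, zero_div, add_self_div_two]
  ring

lemma tendsto_two_mul_add_mul_deriv {μ : ℝ}
    (hμ : ∀ m, m₀ < m → QuadrantBound (nullA u) (nullB u) m (μ / m ^ 2)) :
    Tendsto (fun r => 2 * u 0 r + r * deriv (u 0) r) atTop (nhds 0) := by
  have hlim : Tendsto (fun r : ℝ => 2 * μ / r ^ 2) atTop (nhds 0) :=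
    tendsto_const_nhds.div_atTop (tendsto_pow_atTop two_ne_zero)
  refine squeeze_zero_norm' ?_ hlim
  filter_upwards [eventually_gt_atTop m₀, eventually_ge_atTop 1] with r hr hr₁
  obtain ⟨hA, hB⟩ := hμ r hr r r le_rfl le_rfl
  calc |2 * u 0 r + r * deriv (u 0) r|
      ≤ r * |2 * u 0 r + r * deriv (u 0) r| := le_mul_of_one_le_left (abs_nonneg _) hr₁
    _ = |nullA u r r + nullB u r r| := by
        rw [nullA_add_nullB_self, abs_mul, abs_of_nonneg (zero_le_one.trans hr₁)]
    _ ≤ μ / r ^ 2 + μ / r ^ 2 := (abs_add_le _ _).trans (add_le_add hA hB)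
    _ = 2 * μ / r ^ 2 := by ring

theorem IsExtSol.exists_isSingularStationary_of_quadrantBound (hsol : IsExtSol p 2 m₀ u)
    (hp : 5 ≤ p) (hm₀ : 1 ≤ m₀) (hu : ∀ t r, m₀ + |t| < r → |u t r| ≤ 1 / r)
    (hμ : ∀ m, m₀ < m → QuadrantBound (nullA u) (nullB u) m (22 / m ^ 2))
    (hℓ : Tendsto (fun r => r ^ 2 * u 0 r) atTop (nhds ℓ)) :
    ∃ Z, IsSingularStationary p ℓ Z ∧
      ∀ r, 2 * (m₀ + 1) + 88 * p < r → u 0 r = Z r ∧ dtu u 0 r = 0 := by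
  have hstat : ∀ h r, |h| ≤ 1 → 2 * (m₀ + 1) + 88 * p < r → u h r = u 0 r := fun h r hh hr =>
    hsol.eq_initial_of_quadrantBound hp hm₀ hu hμ hh hr
  have hsol₁ : IsExtSol p 2 (2 * (m₀ + 1) + 88 * p) u := hsol.mono (by linarith)
  obtain ⟨Z, hZ, huZ⟩ := exists_isSingularStationary (by lia) (by linarith)
    (fun r hr => (hsol₁.hasPartialsAt (t := 0) (by simpa using hr)).hasDerivAt_right)
    (fun r hr => hsol₁.hasDerivAt_deriv_of_eq_initial hstat hr) hℓ
    (tendsto_two_mul_add_mul_deriv hμ)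
  exact ⟨Z, hZ, fun r hr =>
    ⟨huZ hr, dtu_eq_zero_of_eq_initial hstat (abs_zero.trans_lt one_pos) hr⟩⟩

end StationaryData

theorem stmt9_general {p : ℕ} (hp : 5 ≤ p) {R₀ C₀ : ℝ} (hR₀ : 0 ≤ R₀) {u : ℝ → ℝ → ℝ}
    (hsol : IsExtSol p 2 R₀ u) (hdata : eH R₀ (u 0) (dtu u 0) ≠ ⊤) (hLL : eLL 2 8 R₀ u ≠ ⊤)
    (hsup : ∀ ρ, R₀ ≤ ρ → supH ρ u ≤ ENNReal.ofReal C₀ * eH ρ (u 0) (dtu u 0))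
    (hvan : ExtEnergyVanishes R₀ u) :
    (∃ t₀ R : ℝ, R₀ < R ∧ ∀ r, |t₀| + R < r → u t₀ r = 0) ∨
    ∃ ℓ : ℝ, ℓ ≠ 0 ∧ ∃ R, R₀ < R ∧ ∃ Z, IsSingularStationary p ℓ Z ∧
      ∀ r, R < r → u 0 r = Z r ∧ dtu u 0 r = 0 := by
  obtain ⟨m₀, hm₀, hRm₀, hu, hμ⟩ :=
    hsol.exists_quadrantBound_of_extEnergyVanishes hp hR₀ hdata hLL hsup hvan
  have hsol₀ : IsExtSol p 2 m₀ u := hsol.mono hRm₀.le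
  obtain ⟨ℓ, hℓ⟩ := (hsol₀.isNullSystem (by linarith)).exists_tendsto_diagonal (by linarith) hμ
  simp only [nullW_self] at hℓ
  rcases eq_or_ne ℓ 0 with rfl | hℓ0
  · exact .inl ⟨0, m₀ + 88 * p, by linarith, fun r hr =>
      hsol₀.eq_zero_of_tendsto_zero hp hm₀ hu hμ hℓ (by simpa using hr)⟩
  · exact .inr ⟨ℓ, hℓ0, 2 * (m₀ + 1) + 88 * p, by linarith,
      hsol₀.exists_isSingularStationary_of_quadrantBound hp hm₀ hu hμ hℓ⟩

/-- dichotomy for non-radiative exterior solutions: either the solution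
vanishes at some time `t₀` outside `{r > |t₀| + R}`, or the data agrees for large `r`
with `(Z_ℓ, 0)` for a singular stationary solution `Z_ℓ`. -/
theorem stmt9 (p : ℕ) (hodd : Odd p) (hp5 : 5 ≤ p) (R₀ C₀ : ℝ) (hR₀ : 0 < R₀) (hC₀ : 0 < C₀)
    (u : ℝ → ℝ → ℝ)
    (hsol : IsExtSol p 2 R₀ u)
    (hdata : eH R₀ (u 0) (fun r => dtu u 0 r) < ⊤)
    (hbd : ∀ ρ : ℝ, R₀ ≤ ρ →
      eLL 2 8 ρ u + eLL 3 6 ρ u + supH ρ u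
        ≤ ENNReal.ofReal C₀ * eH ρ (u 0) (fun r => dtu u 0 r))
    (hvan : ExtEnergyVanishes R₀ u) :
    (∃ t₀ R : ℝ, R₀ < R ∧ ∀ r : ℝ, |t₀| + R < r → u t₀ r = 0) ∨
    (∃ ℓ : ℝ, ℓ ≠ 0 ∧ ∃ R : ℝ, R₀ < R ∧ ∃ Z : ℝ → ℝ,
      ContDiffOn ℝ 2 Z (Ioi (0:ℝ)) ∧
      (∀ r : ℝ, 0 < r →
        deriv (deriv Z) r + (3 / r) * deriv Z r + |Z r| ^ (p - 1) * Z r = 0) ∧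
      (∃ C > (0:ℝ), ∃ r₁ : ℝ, ∀ r : ℝ, r₁ ≤ r →
        |r ^ 2 * Z r - ℓ| ≤ C * r ^ ((4:ℝ) - 2 * (p:ℝ))) ∧
      (∀ r : ℝ, R < r → u 0 r = Z r ∧ dtu u 0 r = 0)) := by
  have hsup : ∀ ρ, R₀ ≤ ρ → supH ρ u ≤ ENNReal.ofReal C₀ * eH ρ (u 0) (dtu u 0) := fun ρ hρ =>
    le_add_self.trans (hbd ρ hρ)
  have hLL : eLL 2 8 R₀ u ≠ ⊤ := ne_top_of_le_ne_top
    (ENNReal.mul_ne_top ENNReal.ofReal_ne_top hdata.ne)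
    (le_self_add.trans (le_self_add.trans (hbd R₀ le_rfl)))
  simpa only [IsSingularStationary, and_assoc] using
    stmt9_general hp5 hR₀.le hsol hdata.ne hLL hsup hvan
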